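/- arXiv:1203.1158 — 4 statements merged into one kernel-verified Lean document; each statement's English description precedes it below -/
import Mathlib

section
/- Let G be a connected graph of diameter 2 on an even number n ≥ 90 of vertices, and for each integer i let V_i = {v ∈ V(G) : deg(v) = i}. If either (1) the number of indices i for which |V_i| is odd is greater than n/2, or (2) |V_i| is even for every i, then h(G) = n/2. -/
open Finset

/-- The multiset of pairwise distances between distinct vertices of `S` in `G`
(one entry for each unordered pair of distinct vertices of `S`). -/
noncomputable def distMultiset {V : Type*} (G : SimpleGraph V) (S : Finset V) : Multiset ℕ :=
  letI := Classical.decEq V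
  (S.sym2.filter fun p => ¬ p.IsDiag).val.map
    (Sym2.lift ⟨fun a b => G.dist a b, fun _ _ => SimpleGraph.dist_comm⟩)

/-- Two disjoint vertex sets are homometric if their distance multisets coincide. -/
def Homometric {V : Type*} (G : SimpleGraph V) (S₁ S₂ : Finset V) : Prop :=
  Disjoint S₁ S₂ ∧ distMultiset G S₁ = distMultiset G S₂

/-- `h(G)`: the largest `h` such that `G` contains two disjoint homometric sets of
size `h` each. -/
noncomputable def homNumber {V : Type*} (G : SimpleGraph V) : ℕ :=
  sSup {h : ℕ | ∃ S₁ S₂ : Finset V, Homometric G S₁ S₂ ∧ S₁.card = h ∧ S₂.card = h}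


/-- balanced splitting of an index set with prescribed signed sum -/
def Bal (a : ℕ → ℤ) (I : Finset ℕ) (c : ℤ) : Prop :=
  ∃ u ⊆ I, 2 * u.card = I.card ∧ 2 * ∑ i ∈ u, a i = ∑ i ∈ I, a i + c

theorem Bal.neg {a : ℕ → ℤ} {I : Finset ℕ} {c : ℤ} (h : Bal a I c) : Bal a I (-c) := by
  obtain ⟨u, hu, h1, h2⟩ := h
  refine ⟨I \ u, sdiff_subset, ?_, ?_⟩
  · rw [card_sdiff_of_subset hu]; omega
  · have := sum_sdiff (f := a) hu
    linarith

theorem Bal.union {a : ℕ → ℤ} {I I' : Finset ℕ} {c c' : ℤ} (h : Bal a I c) (h' : Bal a I' c')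
    (hd : Disjoint I I') : Bal a (I ∪ I') (c + c') := by
  obtain ⟨u, hu, h1, h2⟩ := h
  obtain ⟨u', hu', h1', h2'⟩ := h'
  have hdu : Disjoint u u' := disjoint_of_subset_left hu (disjoint_of_subset_right hu' hd)
  refine ⟨u ∪ u', union_subset_union hu hu', ?_, ?_⟩
  · rw [card_union_of_disjoint hd, card_union_of_disjoint hdu]; omega
  · rw [sum_union hd, sum_union hdu]; linarith

theorem Bal.pair (a : ℕ → ℤ) {x y : ℕ} (h : x ≠ y) : Bal a {x, y} (a y - a x) := by
  refine ⟨{y}, by simp, by rw [card_pair h]; simp, ?_⟩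
  rw [sum_pair h, sum_singleton]; ring

theorem Bal.parity {a : ℕ → ℤ} {I : Finset ℕ} {c : ℤ} (h : Bal a I c) :
    Even (∑ i ∈ I, a i + c) := by
  obtain ⟨u, -, -, h2⟩ := h
  exact ⟨∑ i ∈ u, a i, by linarith⟩

theorem complete_aux (g : ℕ → ℤ) (s : Finset ℕ) :
    (∀ i ∈ s, 0 ≤ g i) → (∀ i ∈ s, g i ≤ 1 + ∑ j ∈ s with g j < g i, g j) →
    ∀ t, 0 ≤ t → t ≤ ∑ i ∈ s, g i → ∃ u ⊆ s, ∑ i ∈ u, g i = t := by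
  induction s using Finset.induction_on_max_value g with
  | empty =>
    intro _ _ t h1 h2
    simp at h2
    exact ⟨∅, by simp, by simp; omega⟩
  | insert x s hx hmax ih =>
    intro hpos hc t h1 h2
    rw [sum_insert hx] at h2
    have ih' := ih (fun i hi => hpos i (mem_insert_of_mem hi)) (by
      intro i hi
      have := hc i (mem_insert_of_mem hi)
      rwa [filter_insert, if_neg (by have := hmax i hi; omega)] at this)
    by_cases ht : t ≤ ∑ i ∈ s, g i
    · obtain ⟨u, hu, hs⟩ := ih' t h1 ht
      exact ⟨u, hu.trans (subset_insert _ _), hs⟩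
    · have hx1 := hc x (mem_insert_self _ _)
      rw [filter_insert, if_neg (by omega)] at hx1
      have : ∑ j ∈ s with g j < g x, g j ≤ ∑ j ∈ s, g j :=
        sum_le_sum_of_subset_of_nonneg (filter_subset _ _)
          (fun i hi _ => hpos i (mem_insert_of_mem hi))
      obtain ⟨u, hu, hs⟩ := ih' (t - g x) (by omega) (by omega)
      refine ⟨insert x u, insert_subset_insert _ hu, ?_⟩
      rw [sum_insert (fun h => hx (hu h)), hs]; ring

/-- counting: `k` items are `≥ x`, the remaining are `≥ b` -/
theorem count_aux (g : ℕ → ℤ) (s : Finset ℕ) (b x : ℤ) (hb : ∀ i ∈ s, b ≤ g i) :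
    ∃ k : ℕ, k = (s.filter fun j => ¬ g j < x).card ∧ k ≤ s.card ∧
      k * x + ∑ j ∈ s with g j < x, g j ≤ ∑ j ∈ s, g j ∧
      b * ((s.card : ℤ) - k) ≤ ∑ j ∈ s with g j < x, g j := by
  refine ⟨_, rfl, card_filter_le _ _, ?_, ?_⟩
  · rw [← sum_filter_add_sum_filter_not s (fun j => g j < x) g]
    have := card_nsmul_le_sum (s.filter fun j => ¬ g j < x) g x (by
      intro i hi; rw [mem_filter] at hi; omega)
    rw [nsmul_eq_mul] at this
    linarith
  · have := card_nsmul_le_sum (s.filter fun j => g j < x) g b (by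
      intro i hi; rw [mem_filter] at hi; exact hb i hi.1)
    rw [nsmul_eq_mul] at this
    have h2 := card_filter_add_card_filter_not (s := s) (fun j => g j < x)
    have h3 : ((s.filter fun j => g j < x).card : ℤ)
      = s.card - (s.filter fun j => ¬ g j < x).card := by rw [← h2]; push_cast; ring
    rw [h3] at this
    linarith

theorem Bal.items (a : ℕ → ℤ) (J : Finset ℕ) (I : ℕ → Finset ℕ) (c : ℕ → ℤ) (u : Finset ℕ)
    (hd : ∀ i j, i ≠ j → Disjoint (I i) (I j)) (hB : ∀ j ∈ J, Bal a (I j) (c j)) :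
    Bal a (J.biUnion I) (∑ j ∈ J, if j ∈ u then c j else - c j) := by
  induction J using Finset.induction_on with
  | empty => exact ⟨∅, by simp, by simp, by simp⟩
  | insert x s hx ih =>
    rw [biUnion_insert, sum_insert hx]
    refine Bal.union ?_ (ih fun j hj => hB j (mem_insert_of_mem hj)) ?_
    · split_ifs
      · exact hB x (mem_insert_self _ _)
      · exact (hB x (mem_insert_self _ _)).neg
    · rw [disjoint_biUnion_right]
      intro i hi
      exact hd _ _ (by rintro rfl; exact hx hi)

theorem Bal.items_self (a : ℕ → ℤ) (J : Finset ℕ) (I : ℕ → Finset ℕ) (c : ℕ → ℤ)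
    (hd : ∀ i j, i ≠ j → Disjoint (I i) (I j)) (hB : ∀ j ∈ J, Bal a (I j) (c j)) :
    Bal a (J.biUnion I) (∑ j ∈ J, c j) := by
  have := Bal.items a J I c J hd hB
  rwa [sum_congr rfl (g := c) (fun j hj => by simp [hj])] at this

theorem Bal.combine (a : ℕ → ℤ) (I0 : Finset ℕ) (e : ℤ) (J : Finset ℕ) (I : ℕ → Finset ℕ)
    (c : ℕ → ℤ) (T : Finset ℕ)
    (h0 : Bal a I0 e)
    (hd : ∀ i j, i ≠ j → Disjoint (I i) (I j)) (hB : ∀ j ∈ J, Bal a (I j) (c j))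
    (hd0 : Disjoint I0 (J.biUnion I)) (hT : I0 ∪ J.biUnion I = T)
    (hev : Even (∑ i ∈ T, a i))
    (hpos : ∀ i ∈ J, 0 ≤ c i)
    (hc : ∀ i ∈ J, c i ≤ 1 + ∑ j ∈ J with c j < c i, c j)
    (he : e ≤ ∑ j ∈ J, c j + 1) (he' : -e ≤ ∑ j ∈ J, c j + 1) : Bal a T 0 := by
  have hp1 := h0.parity
  have hp2 := (Bal.items_self a J I c hd hB).parity
  rw [← hT, sum_union hd0] at hev
  have hp : Even (∑ j ∈ J, c j - e) := by
    obtain ⟨x, hx⟩ := hp1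
    obtain ⟨y, hy⟩ := hp2
    obtain ⟨z, hz⟩ := hev
    exact ⟨y + x - z - e, by linarith⟩
  obtain ⟨t, ht⟩ := hp
  obtain ⟨u, hu, hs⟩ := complete_aux c J hpos hc t (by omega) (by omega)
  have h1 := h0.union (Bal.items a J I c u hd hB) hd0
  rw [hT] at h1
  convert h1 using 1
  have h2 : J.filter (· ∈ u) = u := by
    ext i; rw [mem_filter]; exact ⟨fun h => h.2, fun h => ⟨hu h, h⟩⟩
  have h3 := sum_filter_add_sum_filter_not J (· ∈ u) c
  rw [← sum_filter_add_sum_filter_not J (· ∈ u) (fun j => if j ∈ u then c j else - c j),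
    sum_congr rfl (g := fun j => c j) (s₂ := J.filter (· ∈ u))
      (fun j hj => by rw [mem_filter] at hj; simp [hj.2]),
    sum_congr rfl (g := fun j => - c j) (s₂ := J.filter (¬ · ∈ u))
      (fun j hj => by rw [mem_filter] at hj; simp [hj.2]), sum_neg_distrib]
  rw [h2] at h3 ⊢
  linarith

theorem mono_gap (a : ℕ → ℤ) (ha : StrictMono a) (i d : ℕ) : a i + d ≤ a (i + d) := by
  induction d with
  | zero => simp
  | succ d ih =>
    have := ha (Nat.lt_succ_self (i + d))
    rw [← add_assoc]
    push_cast
    simp only [Nat.succ_eq_add_one] at this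
    omega

theorem mono_gap' (a : ℕ → ℤ) (ha : StrictMono a) {i j : ℕ} (h : i ≤ j) : a i + j ≤ a j + i := by
  obtain ⟨d, rfl⟩ := Nat.exists_eq_add_of_le h
  have := mono_gap a ha i d
  push_cast
  linarith

theorem telescope (a : ℕ → ℤ) (M : ℕ) :
    ∑ i ∈ range (M + 1), (a (2 * i + 1) - a (2 * i)) +
      ∑ i ∈ range M, (a (2 * i + 2) - a (2 * i + 1)) = a (2 * M + 1) - a 0 := by
  induction M with
  | zero => simp
  | succ M ih =>
    rw [sum_range_succ _ (M + 1), sum_range_succ (fun i => a (2 * i + 2) - a (2 * i + 1)) M]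
    have : 2 * (M + 1) = 2 * M + 2 := by ring
    rw [this]
    linarith

theorem exists_first (f : ℕ → ℤ) (x : ℤ) (L : ℕ) (h0 : f 0 < x) (hL : x ≤ f L) :
    ∃ r < L, f r < x ∧ x ≤ f (r + 1) := by
  induction L with
  | zero => omega
  | succ L ih =>
    by_cases h : x ≤ f L
    · obtain ⟨r, hr, h1⟩ := ih h
      exact ⟨r, by omega, h1⟩
    · exact ⟨L, by omega, by omega, hL⟩

theorem mem_pairs (J : Finset ℕ) (i : ℕ) :
    i ∈ J.biUnion (fun j => ({2 * j, 2 * j + 1} : Finset ℕ)) ↔ i / 2 ∈ J := by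
  simp only [mem_biUnion, mem_insert, mem_singleton]
  constructor
  · rintro ⟨j, hj, h⟩
    have : i / 2 = j := by omega
    rwa [this]
  · intro h
    exact ⟨_, h, by omega⟩

theorem disj_pairs (i j : ℕ) (h : i ≠ j) :
    Disjoint ({2 * i, 2 * i + 1} : Finset ℕ) {2 * j, 2 * j + 1} := by
  rw [disjoint_left]
  intro x
  simp only [mem_insert, mem_singleton]
  omega

/-- the case of one huge difference -/
theorem huge_case (a : ℕ → ℤ) (ha : StrictMono a) (M : ℕ) (hM : 22 ≤ M)
    (hspan : a (2 * M + 1) - a 0 ≤ 4 * M)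
    (hev : Even (∑ i ∈ range (2 * (M + 1)), a i)) (p : ℕ) (hp : p ≤ M)
    (hbig : (M : ℤ) + 2 ≤ a (2 * p + 1) - a (2 * p))
    (hR : ∑ i ∈ (range (M + 1)).erase p, (a (2 * i + 1) - a (2 * i)) + 2
      ≤ a (2 * p + 1) - a (2 * p)) :
    Bal a (range (2 * (M + 1))) 0 := by
  set g : ℕ → ℤ := fun i => a (2 * i + 1) - a (2 * i) with hg
  have hg1 : ∀ i, 1 ≤ g i := fun i => by
    have := ha (Nat.lt_succ_self (2 * i)); simp only [hg, Nat.succ_eq_add_one] at this ⊢; omega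
  obtain ⟨H, hH⟩ : ∃ H, H = a (2 * p + 1) - a (2 * p) := ⟨_, rfl⟩
  rw [← hH] at hbig hR
  -- slack estimates
  have hlow : ∀ i j, i ≤ j → j ≤ 2 * p → a j - a i ≤ j - i + (2 * M - H) := by
    intro i j hij hj
    have h1 := mono_gap' a ha (Nat.zero_le i)
    have h2 := mono_gap' a ha hj
    have h3 := mono_gap' a ha (show 2 * p + 1 ≤ 2 * M + 1 by omega)
    push_cast at *
    linarith
  have hhigh : ∀ i j, i ≤ j → 2 * p + 1 ≤ i → j ≤ 2 * M + 1 →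
      a j - a i ≤ j - i + (2 * M - H) := by
    intro i j hij hi hj
    have h1 := mono_gap' a ha (Nat.zero_le (2 * p))
    have h2 := mono_gap' a ha hi
    have h3 := mono_gap' a ha hj
    push_cast at *
    linarith
  have hHle : H ≤ 2 * M := by
    have := hlow (2 * p) (2 * p) le_rfl le_rfl
    omega
  -- choose the two pairs
  have hsr : ∃ s r, s < r ∧ r ≤ M ∧ s ≠ p ∧ r ≠ p ∧
      H - M + 1 ≤ a (2 * r) + a (2 * r + 1) - (a (2 * s) + a (2 * s + 1)) ∧
      a (2 * r) + a (2 * r + 1) - (a (2 * s) + a (2 * s + 1)) ≤ H + M - 1 := by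
    have key : ∀ s L : ℕ, M ≤ 2 * L + 2 → s + L ≤ M → (s + L < p ∨ p < s) →
        ∃ s r, s < r ∧ r ≤ M ∧ s ≠ p ∧ r ≠ p ∧
        H - M + 1 ≤ a (2 * r) + a (2 * r + 1) - (a (2 * s) + a (2 * s + 1)) ∧
        a (2 * r) + a (2 * r + 1) - (a (2 * s) + a (2 * s + 1)) ≤ H + M - 1 := by
      intro s L hL hsL hp'
      obtain ⟨r, hr, h1, h2⟩ := exists_first
        (fun t => a (2 * (s + t)) + a (2 * (s + t) + 1) - (a (2 * s) + a (2 * s + 1)))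
        (H - M + 1) L (by simp; omega) (by
          have h1 := mono_gap' a ha (show 2 * s ≤ 2 * (s + L) by omega)
          have h2 := mono_gap' a ha (show 2 * s + 1 ≤ 2 * (s + L) + 1 by omega)
          push_cast at *
          omega)
      refine ⟨s, s + (r + 1), by omega, by omega, by omega, by omega, h2, ?_⟩
      have hst : ∀ i j, i ≤ j → 2 * s ≤ i → j ≤ 2 * (s + L) + 1 →
          a j - a i ≤ j - i + (2 * M - H) := by
        intro i j hij hi hj
        rcases hp' with h | h
        · exact hlow i j hij (by omega)
        · exact hhigh i j hij (by omega) (by omega)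
      have h3 := hst (2 * (s + r)) (2 * (s + (r + 1))) (by omega) (by omega) (by omega)
      have h4 := hst (2 * (s + r) + 1) (2 * (s + (r + 1)) + 1) (by omega) (by omega) (by omega)
      have h5 := mono_gap' a ha (show 2 * s ≤ 2 * (s + r) by omega)
      have h6 := mono_gap' a ha (show 2 * s + 1 ≤ 2 * (s + r) + 1 by omega)
      push_cast at *
      rcases Nat.eq_zero_or_pos r with rfl | hr0
      · simp only [add_zero] at *
        omega
      · omega
    rcases le_or_gt M (2 * p) with h | h
    · exact key 0 (p - 1) (by omega) (by omega) (by omega)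
    · exact key (p + 1) (M - p - 1) (by omega) (by omega) (by omega)
  obtain ⟨s, r, hsr, hrM, hsp, hrp, hc1, hc2⟩ := hsr
  set c := a (2 * r) + a (2 * r + 1) - (a (2 * s) + a (2 * s + 1)) with hc
  have hB1 : Bal a {2 * p, 2 * p + 1} H := hH ▸ Bal.pair a (by omega)
  have hB2 : Bal a {2 * s, 2 * s + 1, 2 * r, 2 * r + 1} c := by
    refine ⟨{2 * r, 2 * r + 1}, ?_, ?_, ?_⟩
    · intro x; simp only [mem_insert, mem_singleton]; omega
    · rw [card_pair (by omega), card_insert_of_notMem, card_insert_of_notMem, card_pair (by omega)]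
        <;> simp only [mem_insert, mem_singleton] <;> omega
    · rw [sum_pair (by omega), sum_insert, sum_insert, sum_pair (by omega)]
      · rw [hc]; ring
      all_goals simp only [mem_insert, mem_singleton]; omega
  set J := (((range (M + 1)).erase p).erase s).erase r with hJ
  have hmem1 : s ∈ (range (M + 1)).erase p := by simp; omega
  have hmem2 : r ∈ ((range (M + 1)).erase p).erase s := by simp; omega
  have hcard : J.card = M - 2 := by
    rw [hJ, card_erase_of_mem hmem2, card_erase_of_mem hmem1, card_erase_of_mem (by simp; omega),
      card_range]
    omega
  have hsum : ∑ i ∈ J, g i + g r + g s = ∑ i ∈ (range (M + 1)).erase p, g i := by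
    rw [sum_erase_add _ _ hmem2, sum_erase_add _ _ hmem1]
  have hlb : (M : ℤ) - 2 ≤ ∑ i ∈ J, g i := by
    have := card_nsmul_le_sum J g 1 (fun i _ => hg1 i)
    rw [hcard, nsmul_eq_mul] at this
    push_cast [Nat.cast_sub (show 2 ≤ M by omega)] at this
    linarith
  have hub : ∑ i ∈ J, g i ≤ 2 * M - 5 := by
    have h1 := hg1 r
    have h2 := hg1 s
    by_cases hcase : H ≤ 2 * M - 1
    · linarith
    · -- all other gaps are one
      have : ∀ i ∈ J, g i ≤ 1 := by
        intro i hi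
        simp only [hJ, mem_erase, mem_range] at hi
        rcases lt_or_gt_of_ne hi.2.2.1 with h | h
        · have := hlow (2 * i) (2 * i + 1) (by omega) (by omega)
          push_cast at this
          simp only [hg]; omega
        · have := hhigh (2 * i) (2 * i + 1) (by omega) (by omega) (by omega)
          push_cast at this
          simp only [hg]; omega
      have := sum_le_card_nsmul J g 1 this
      rw [hcard, nsmul_eq_mul] at this
      push_cast [Nat.cast_sub (show 2 ≤ M by omega)] at this
      linarith
  refine Bal.combine a ({2 * p, 2 * p + 1} ∪ {2 * s, 2 * s + 1, 2 * r, 2 * r + 1}) (H + -c) J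
    (fun j => {2 * j, 2 * j + 1}) g _ (hB1.union hB2.neg ?_) disj_pairs
    (fun j _ => Bal.pair a (by omega)) ?_ ?_ hev (fun i _ => by have := hg1 i; omega) ?_ ?_ ?_
  · rw [disjoint_left]; intro x; simp only [mem_insert, mem_singleton]; omega
  · rw [disjoint_left]; intro x
    rw [mem_pairs, hJ]
    simp only [mem_insert, mem_singleton, mem_union, mem_erase, mem_range]; omega
  · ext x
    rw [mem_union, mem_pairs, hJ]
    simp only [mem_insert, mem_singleton, mem_union, mem_erase, mem_range]; omega
  · intro i hi
    obtain ⟨k, hk, hk1, hk2, hk3⟩ := count_aux g J 1 (g i) (fun j _ => hg1 j)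
    have hkpos : 1 ≤ k := by
      rw [hk]; exact card_pos.mpr ⟨i, by simp [hi]⟩
    have hgi := hg1 i
    rw [hcard] at hk1 hk3
    push_cast [Nat.cast_sub (show 2 ≤ M by omega)] at hk3
    have hk1' : (1 : ℤ) ≤ k := by exact_mod_cast hkpos
    have hkM : (k : ℤ) ≤ M - 2 := by omega
    nlinarith [mul_nonneg (sub_nonneg.mpr hk1') (sub_nonneg.mpr hgi)]
  · linarith
  · linarith

/-- the case where all differences are at least two -/
theorem two_case (a : ℕ → ℤ) (ha : StrictMono a) (M : ℕ) (hM : 22 ≤ M)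
    (hspan : a (2 * M + 1) - a 0 ≤ 4 * M)
    (hev : Even (∑ i ∈ range (2 * (M + 1)), a i))
    (h2 : ∀ i ∈ range (M + 1), 2 ≤ a (2 * i + 1) - a (2 * i))
    (hS : ∑ i ∈ range (M + 1), (a (2 * i + 1) - a (2 * i)) ≤ 3 * M) :
    Bal a (range (2 * (M + 1))) 0 := by
  set g : ℕ → ℤ := fun i => a (2 * i + 1) - a (2 * i) with hg
  have htel := telescope a M
  obtain ⟨j, hj, hj1⟩ : ∃ j < M, a (2 * j + 2) - a (2 * j + 1) ≤ 1 := by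
    by_contra! hcon
    have e1 := card_nsmul_le_sum (range (M + 1)) g 2 h2
    have e2 := card_nsmul_le_sum (range M) (fun i => a (2 * i + 2) - a (2 * i + 1)) 2
      (fun i hi => by have := hcon i (mem_range.mp hi); omega)
    rw [card_range, nsmul_eq_mul] at e1 e2
    push_cast at e1 e2
    linarith
  have hj2 : a (2 * j + 2) - a (2 * j + 1) = 1 := by
    have := ha (show 2 * j + 1 < 2 * j + 2 by omega); omega
  set J0 := ((range (M + 1)).erase j).erase (j + 1) with hJ0
  have hmem1 : j ∈ range (M + 1) := by simp; omega
  have hmem2 : j + 1 ∈ (range (M + 1)).erase j := by simp; omega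
  have hcard : J0.card = M - 1 := by
    rw [hJ0, card_erase_of_mem hmem2, card_erase_of_mem hmem1, card_range]
    omega
  have hsum : ∑ i ∈ J0, g i + g (j + 1) + g j = ∑ i ∈ range (M + 1), g i := by
    rw [sum_erase_add _ _ hmem2, sum_erase_add _ _ hmem1]
  have hJ2 : ∀ i ∈ J0, 2 ≤ g i := fun i hi => h2 i (mem_of_mem_erase (mem_of_mem_erase hi))
  have hlb : 2 * ((M : ℤ) - 1) ≤ ∑ i ∈ J0, g i := by
    have := card_nsmul_le_sum J0 g 2 hJ2
    rw [hcard, nsmul_eq_mul] at this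
    push_cast [Nat.cast_sub (show 1 ≤ M by omega)] at this
    linarith
  have hgj := h2 j hmem1
  have hgj1 := h2 (j + 1) (mem_of_mem_erase hmem2)
  have hjJ : j ∉ J0 := by simp [hJ0]
  set I : ℕ → Finset ℕ := fun i => if i = j then {2 * j + 1, 2 * j + 2} else
    if i = j + 1 then ∅ else {2 * i, 2 * i + 1} with hI
  set c : ℕ → ℤ := fun i => if i = j then 1 else g i with hcdef
  have hcJ : ∀ i ∈ J0, c i = g i := fun i hi => by
    have : i ≠ j := by rintro rfl; exact hjJ hi
    simp [hcdef, this]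
  have hcj : c j = 1 := by simp [hcdef]
  have hIm : ∀ x, x ∈ (insert j J0).biUnion I ↔
      (x = 2 * j + 1 ∨ x = 2 * j + 2 ∨ x / 2 ∈ J0) := by
    intro x
    rw [biUnion_insert, mem_union]
    have e1 : I j = {2 * j + 1, 2 * j + 2} := by simp [hI]
    have e2 : J0.biUnion I = J0.biUnion (fun j => ({2 * j, 2 * j + 1} : Finset ℕ)) := by
      refine biUnion_congr rfl ?_
      intro i hi
      simp only [hJ0, mem_erase] at hi
      simp [hI, hi.1, hi.2.1]
    rw [e1, e2, mem_pairs]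
    simp only [mem_insert, mem_singleton]
    tauto
  have hcsum : ∑ i ∈ insert j J0, c i = 1 + ∑ i ∈ J0, g i := by
    rw [sum_insert hjJ, hcj, sum_congr rfl hcJ]
  have hBD : Bal a {2 * j, 2 * j + 3} (a (2 * j + 3) - a (2 * j)) := Bal.pair a (by omega)
  have hD : a (2 * j + 3) - a (2 * j) = g j + g (j + 1) + 1 := by
    have : 2 * (j + 1) = 2 * j + 2 := by ring
    simp only [hg, this]
    linarith
  have hg01 : 2 ≤ g j := hgj
  have hg02 : 2 ≤ g (j + 1) := hgj1
  refine Bal.combine a {2 * j, 2 * j + 3} _ (insert j J0) I c _ hBD ?_ ?_ ?_ ?_ hev ?_ ?_ ?_ ?_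
  · intro i i' hii
    rw [disjoint_left]; intro x
    simp only [hI]
    split_ifs <;> simp only [mem_insert, mem_singleton, notMem_empty, false_imp_iff,
      not_false_eq_true, imp_true_iff] <;> omega
  · intro i hi
    by_cases hij : i = j
    · subst hij
      have := Bal.pair a (show 2 * i + 1 ≠ 2 * i + 2 by omega)
      rw [hj2] at this
      simpa [hI, hcdef] using this
    · have hi' := hi
      simp only [hJ0, mem_erase, mem_insert, hij, false_or] at hi'
      have := Bal.pair a (show 2 * i ≠ 2 * i + 1 by omega)
      simpa [hI, hcdef, hij, hi'.1] using this
  · rw [disjoint_left]; intro x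
    rw [hIm, hJ0]
    simp only [mem_insert, mem_singleton, mem_erase, mem_range]; omega
  · ext x
    rw [mem_union, hIm, hJ0]
    simp only [mem_insert, mem_singleton, mem_erase, mem_range]; omega
  · intro i hi
    rw [mem_insert] at hi
    rcases hi with rfl | hi
    · rw [hcj]; omega
    · rw [hcJ i hi]; have := hJ2 i hi; omega
  · intro i hi
    rw [mem_insert] at hi
    rcases hi with rfl | hi
    · rw [hcj]
      have : 0 ≤ ∑ j ∈ insert i J0 with c j < 1, c j := by
        refine sum_nonneg ?_
        intro k hk
        rw [mem_filter, mem_insert] at hk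
        rcases hk.1 with rfl | hk
        · rw [hcj]; omega
        · rw [hcJ k hk]; have := hJ2 k hk; omega
      linarith
    · rw [hcJ i hi]
      have hgi := hJ2 i hi
      rw [filter_insert, if_pos (by rw [hcj]; omega), sum_insert (by simp [hjJ]), hcj]
      have e : ∑ k ∈ J0 with c k < g i, c k = ∑ k ∈ J0 with g k < g i, g k := by
        rw [filter_congr (fun k hk => by rw [hcJ k hk])]
        exact sum_congr rfl (fun k hk => hcJ k (mem_of_mem_filter k hk))
      rw [e]
      obtain ⟨k, hk, hk1, hk2, hk3⟩ := count_aux g J0 2 (g i) hJ2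
      have hkpos : 1 ≤ k := by
        rw [hk]; exact card_pos.mpr ⟨i, by simp [hi]⟩
      rw [hcard] at hk1 hk3
      push_cast [Nat.cast_sub (show 1 ≤ M by omega)] at hk3
      have hk1' : (1 : ℤ) ≤ k := by exact_mod_cast hkpos
      have hkM : (k : ℤ) ≤ M - 1 := by omega
      by_contra! hcon
      have h3 : 3 ≤ g i := by linarith
      nlinarith [mul_nonneg (sub_nonneg.mpr hk1') (sub_nonneg.mpr h3)]
  · rw [hcsum, hD]; linarith
  · rw [hcsum, hD]; linarith

theorem main_num (a : ℕ → ℤ) (ha : StrictMono a) (M : ℕ) (hM : 22 ≤ M)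
    (hspan : a (2 * M + 1) - a 0 ≤ 4 * M)
    (hev : Even (∑ i ∈ range (2 * (M + 1)), a i)) :
    Bal a (range (2 * (M + 1))) 0 := by
  set g : ℕ → ℤ := fun i => a (2 * i + 1) - a (2 * i) with hg
  have hg1 : ∀ i, 1 ≤ g i := fun i => by
    have := ha (Nat.lt_succ_self (2 * i)); simp only [hg, Nat.succ_eq_add_one] at this ⊢; omega
  have hS : ∑ i ∈ range (M + 1), g i ≤ 3 * M := by
    have htel := telescope a M
    have e2 := card_nsmul_le_sum (range M) (fun i => a (2 * i + 2) - a (2 * i + 1)) 1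
      (fun i hi => by have := ha (show 2 * i + 1 < 2 * i + 2 by omega); omega)
    rw [card_range, nsmul_eq_mul] at e2
    simp only [hg]
    linarith
  by_cases hc : ∀ i ∈ range (M + 1), g i ≤ 1 + ∑ j ∈ range (M + 1) with g j < g i, g j
  · refine Bal.combine a ∅ 0 (range (M + 1)) (fun j => {2 * j, 2 * j + 1}) g _
      ⟨∅, by simp, by simp, by simp⟩ disj_pairs (fun j _ => Bal.pair a (by omega)) (by simp) ?_
      hev (fun i _ => by have := hg1 i; omega) hc ?_ ?_
    · ext x
      rw [mem_union, mem_pairs]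
      simp only [mem_range, notMem_empty, false_or]; omega
    all_goals
      have := sum_nonneg (s := range (M + 1)) (f := g) (fun i _ => by have := hg1 i; omega)
      linarith
  · push Not at hc
    obtain ⟨p, hp, hlt⟩ := hc
    obtain ⟨k, hk, hk1, hk2, hk3⟩ := count_aux g (range (M + 1)) 1 (g p) (fun j _ => hg1 j)
    have hkpos : 1 ≤ k := by
      rw [hk]; exact card_pos.mpr ⟨p, by simp at hp ⊢; exact hp⟩
    rw [card_range] at hk1 hk3
    push_cast at hk3
    have hcase : k = 1 ∨ k = M + 1 := by
      by_contra! hne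
      have h1 : (2 : ℤ) ≤ k := by omega
      have h2 : (k : ℤ) ≤ M := by omega
      nlinarith [mul_nonneg (sub_nonneg.mpr h1) (sub_nonneg.mpr h2)]
    rcases hcase with rfl | rfl
    · refine huge_case a ha M hM hspan hev p (by simp at hp; omega) ?_ ?_
      · change (M : ℤ) + 2 ≤ g p
        push_cast at hk3
        linarith
      · change ∑ i ∈ (range (M + 1)).erase p, g i + 2 ≤ g p
        have : (range (M + 1)).erase p = (range (M + 1)).filter (fun j => g j < g p) := by
          symm
          obtain ⟨q, hq⟩ := card_eq_one.mp hk.symm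
          have hpq : p = q := by
            have : p ∈ (range (M + 1)).filter fun j => ¬ g j < g p := by
              simp at hp ⊢; exact hp
            rw [hq] at this; simpa using this
          subst hpq
          ext x
          have hx : x ∈ (range (M + 1)).filter (fun j => ¬ g j < g p) ↔ x ∈ ({p} : Finset ℕ) := by
            rw [hq]
          rw [mem_filter, mem_singleton] at hx
          rw [mem_filter, mem_erase]
          tauto
        rw [this]
        linarith
    · refine two_case a ha M hM hspan hev ?_ hS
      have hall : (range (M + 1)).filter (fun j => ¬ g j < g p) = range (M + 1) := by
        refine eq_of_subset_of_card_le (filter_subset _ _) ?_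
        rw [← hk, card_range]
      intro i hi
      rw [← hall, mem_filter] at hi
      change 2 ≤ g i
      have : 0 ≤ ∑ j ∈ range (M + 1) with g j < g p, g j :=
        sum_nonneg (fun i _ => by have := hg1 i; omega)
      have := hi.2
      omega

theorem two_mul_sum_sym2 {V : Type*} [DecidableEq V] (S : Finset V) (f : Sym2 V → ℕ) :
    2 * ∑ e ∈ S.sym2.filter (fun p => ¬ p.IsDiag), f e = ∑ z ∈ S.offDiag, f s(z.1, z.2) := by
  have himg : S.sym2.filter (fun p => ¬ p.IsDiag) = S.offDiag.image Sym2.mk.uncurry := by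
    rw [sym2_eq_image, Sym2.filter_image_mk_not_isDiag]
  have h := sum_comp (s := S.offDiag) f (Sym2.mk.uncurry : V × V → Sym2 V)
  rw [himg, mul_sum]
  refine Eq.trans ?_ h.symm
  refine sum_congr rfl ?_
  intro e he
  rw [smul_eq_mul]
  congr 1
  obtain ⟨⟨x, y⟩, hxy, rfl⟩ := mem_image.mp he
  rw [mem_offDiag] at hxy
  have : {z ∈ S.offDiag | Sym2.mk.uncurry z = Sym2.mk.uncurry (x, y)} = {(x, y), (y, x)} := by
    ext ⟨z, w⟩
    simp only [mem_filter, mem_offDiag, Function.uncurry, Sym2.eq_iff, mem_insert,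
      mem_singleton, Prod.mk.injEq]
    constructor
    · rintro ⟨_, h⟩; exact h
    · rintro (⟨rfl, rfl⟩ | ⟨rfl, rfl⟩)
      · exact ⟨hxy, by simp⟩
      · exact ⟨⟨hxy.2.1, hxy.1, fun h => hxy.2.2 h.symm⟩, by simp⟩
  rw [this, card_pair]
  intro h
  exact hxy.2.2 (Prod.mk.inj h).1

theorem multiset_one_two (D : Multiset ℕ) (h : ∀ x ∈ D, x = 1 ∨ x = 2) :
    ∃ p q, D = Multiset.replicate p 1 + Multiset.replicate q 2 := by
  induction D using Multiset.induction_on with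
  | empty => exact ⟨0, 0, by simp⟩
  | cons x D ih =>
    obtain ⟨p, q, hpq⟩ := ih fun y hy => h y (Multiset.mem_cons_of_mem hy)
    rcases h x (Multiset.mem_cons_self x D) with rfl | rfl
    · exact ⟨p + 1, q, by rw [hpq, Multiset.replicate_succ, Multiset.cons_add]⟩
    · exact ⟨p, q + 1, by rw [hpq, Multiset.replicate_succ, Multiset.add_cons]⟩

theorem multiset_eq (D D' : Multiset ℕ) (h : ∀ x ∈ D, x = 1 ∨ x = 2)
    (h' : ∀ x ∈ D', x = 1 ∨ x = 2) (hc : D.card = D'.card) (hs : D.sum = D'.sum) : D = D' := by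
  obtain ⟨p, q, rfl⟩ := multiset_one_two D h
  obtain ⟨p', q', rfl⟩ := multiset_one_two D' h'
  simp at hc hs
  have h1 : p = p' := by omega
  have h2 : q = q' := by omega
  rw [h1, h2]

theorem two_mul_card_dm {V : Type*} (G : SimpleGraph V) (S : Finset V) :
    2 * (distMultiset G S).card = S.card * S.card - S.card := by
  classical
  unfold distMultiset
  rw [Multiset.card_map]
  have h := two_mul_sum_sym2 S (fun _ => 1)
  rw [sum_const, sum_const, smul_eq_mul, smul_eq_mul, mul_one, mul_one, offDiag_card] at h
  rw [← h]
  congr!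

theorem two_mul_sum_dm {V : Type*} (G : SimpleGraph V) (S : Finset V) :
    2 * (distMultiset G S).sum = ∑ x ∈ S, ∑ y ∈ S, G.dist x y := by
  classical
  have h := two_mul_sum_sym2 S
    (Sym2.lift ⟨fun a b => G.dist a b, fun _ _ => SimpleGraph.dist_comm⟩)
  have h2 : ∑ z ∈ S.offDiag, G.dist z.1 z.2 = ∑ x ∈ S, ∑ y ∈ S, G.dist x y := by
    rw [← sum_product (s := S) (t := S) (f := fun z => G.dist z.1 z.2)]
    refine sum_subset (fun z hz => ?_) ?_
    · rw [mem_offDiag] at hz; rw [mem_product]; exact ⟨hz.1, hz.2.1⟩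
    · rintro ⟨x, y⟩ hz hz'
      rw [mem_product] at hz
      rw [mem_offDiag] at hz'
      have : x = y := by by_contra hne; exact hz' ⟨hz.1, hz.2, hne⟩
      subst this
      simp
  rw [← h2]
  refine Eq.trans ?_ h
  unfold distMultiset
  simp only [Finset.sum]

theorem mem_dm {V : Type*} (G : SimpleGraph V) (hG : G.Connected) (hdiam : G.diam = 2)
    (S : Finset V) : ∀ x ∈ distMultiset G S, x = 1 ∨ x = 2 := by
  classical
  intro x hx
  unfold distMultiset at hx
  rw [Multiset.mem_map] at hx
  obtain ⟨e, he, rfl⟩ := hx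
  rw [mem_val, mem_filter] at he
  induction e using Sym2.ind with
  | _ x y =>
    have hne : x ≠ y := by simpa using he.2
    have h1 : G.dist x y ≤ 2 := by
      rw [← hdiam]
      exact SimpleGraph.dist_le_diam (SimpleGraph.ediam_ne_top_of_diam_ne_zero (by omega))
    have h2 := hG.pos_dist_of_ne hne
    simp only [Sym2.lift_mk]
    omega

theorem sum_dist_row {V : Type*} [Fintype V] [DecidableEq V] (G : SimpleGraph V)
    [DecidableRel G.Adj] (hG : G.Connected) (hdiam : G.diam = 2) (x : V) :
    ∑ y, G.dist x y + G.degree x + 2 = 2 * Fintype.card V := by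
  have h : ∀ y, G.dist x y + (if G.Adj x y then 1 else 0) + (if x = y then 2 else 0) = 2 := by
    intro y
    by_cases hxy : x = y
    · subst hxy; simp
    have h1 : G.dist x y ≤ 2 := by
      rw [← hdiam]
      exact SimpleGraph.dist_le_diam (SimpleGraph.ediam_ne_top_of_diam_ne_zero (by omega))
    have h2 := hG.pos_dist_of_ne hxy
    have h3 : G.dist x y = 1 ↔ G.Adj x y := SimpleGraph.dist_eq_one_iff_adj
    by_cases ha : G.Adj x y
    · simp [ha, hxy, h3.mpr ha]
    · have : G.dist x y ≠ 1 := fun h => ha (h3.mp h)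
      simp [ha, hxy]; omega
  have h2 := sum_congr (rfl : (univ : Finset V) = univ) (fun y _ => h y)
  rw [sum_add_distrib, sum_add_distrib, sum_const, card_univ, smul_eq_mul] at h2
  rw [sum_boole, sum_ite_eq] at h2
  simp only [mem_univ, if_true] at h2
  rw [SimpleGraph.degree, SimpleGraph.neighborFinset_eq_filter]
  simp only [Nat.cast_id] at h2
  omega

theorem homometric_of_half {V : Type*} [Fintype V] [DecidableEq V] (G : SimpleGraph V)
    [DecidableRel G.Adj] (hG : G.Connected) (hdiam : G.diam = 2) (S : Finset V)
    (hc : 2 * S.card = Fintype.card V)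
    (hs : 2 * ∑ v ∈ S, G.degree v = ∑ v, G.degree v) : Homometric G S Sᶜ := by
  refine ⟨disjoint_compl_right, ?_⟩
  have hcc : Sᶜ.card = S.card := by rw [card_compl]; omega
  refine multiset_eq _ _ (mem_dm G hG hdiam S) (mem_dm G hG hdiam _) ?_ ?_
  · have h1 := two_mul_card_dm G S
    have h2 := two_mul_card_dm G Sᶜ
    rw [hcc] at h2
    omega
  · have h1 := two_mul_sum_dm G S
    have h2 := two_mul_sum_dm G Sᶜ
    have row : ∀ T : Finset V, ∑ x ∈ T, ∑ y, G.dist x y + ∑ x ∈ T, G.degree x + T.card * 2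
        = T.card * (2 * Fintype.card V) := by
      intro T
      have := sum_congr (rfl : T = T) (fun x _ => sum_dist_row G hG hdiam x)
      simpa [sum_add_distrib] using this
    have split : ∀ T U : Finset V, ∑ x ∈ T, ∑ y, G.dist x y =
        ∑ x ∈ T, ∑ y ∈ S, G.dist x y + ∑ x ∈ T, ∑ y ∈ Sᶜ, G.dist x y := by
      intro T _
      rw [← sum_add_distrib]
      exact sum_congr rfl fun x _ => (sum_add_sum_compl S _).symm
    have comm : ∑ x ∈ S, ∑ y ∈ Sᶜ, G.dist x y = ∑ x ∈ Sᶜ, ∑ y ∈ S, G.dist x y := by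
      rw [sum_comm]
      simp only [SimpleGraph.dist_comm]
    have r1 := row S
    have r2 := row Sᶜ
    rw [hcc] at r2
    have s1 := split S S
    have s2 := split Sᶜ S
    have d := sum_add_sum_compl S (fun v => G.degree v)
    omega

/-- monotone enumeration of a finite set of naturals -/
theorem enum_finset (A : Finset ℕ) : ∃ f : ℕ → ℕ, StrictMono f ∧ (range A.card).image f = A := by
  classical
  obtain ⟨N, hN⟩ : ∃ N, ∀ x ∈ A, x < N := ⟨A.sup id + 1, fun x hx =>
    Nat.lt_succ_of_le (le_sup (f := id) hx)⟩
  have hinf : (Set.ofPred fun x => x ∈ A ∨ N ≤ x).Infinite :=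
    (Set.Ici_infinite N).mono fun x hx => Or.inr hx
  have hmono := Nat.nth_strictMono hinf
  refine ⟨Nat.nth fun x => x ∈ A ∨ N ≤ x, hmono, ?_⟩
  have hcnt : Nat.count (fun x => x ∈ A ∨ N ≤ x) N = A.card := by
    rw [Nat.count_eq_card_filter_range]
    congr 1
    ext x
    simp only [mem_filter, mem_range]
    constructor
    · rintro ⟨h1, h2 | h2⟩
      · exact h2
      · omega
    · exact fun h => ⟨hN x h, Or.inl h⟩
  symm
  refine eq_of_subset_of_card_le ?_ ?_
  · intro x hx
    refine mem_image.mpr ⟨Nat.count (fun x => x ∈ A ∨ N ≤ x) x, ?_, Nat.nth_count (Or.inl hx)⟩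
    rw [mem_range, ← hcnt]
    exact Nat.count_strict_mono (Or.inl hx) (hN x hx)
  · exact card_image_le.trans (by simp)

theorem num_finset (A : Finset ℕ) (M n : ℕ) (hM : 22 ≤ M) (hA : A.card = 2 * (M + 1))
    (hn : n ≤ 4 * M + 2) (hlo : ∀ x ∈ A, 1 ≤ x ∧ x < n) (hev : Even (∑ x ∈ A, x)) :
    ∃ U ⊆ A, 2 * U.card = A.card ∧ 2 * ∑ x ∈ U, x = ∑ x ∈ A, x := by
  obtain ⟨f, hf, himg⟩ := enum_finset A
  rw [hA] at himg
  have hmem : ∀ i < 2 * (M + 1), f i ∈ A := fun i hi => by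
    rw [← himg]; exact mem_image_of_mem f (mem_range.mpr hi)
  have hsum : ∀ u : Finset ℕ, ∑ x ∈ u.image f, x = ∑ i ∈ u, f i := fun u =>
    sum_image fun i _ j _ h => hf.injective h
  have hB := main_num (fun i => (f i : ℤ)) (fun i j h => by simpa using hf h) M hM (by
    have h1 := hlo _ (hmem (2 * M + 1) (by omega))
    have h2 := hlo _ (hmem 0 (by omega))
    omega) (by
    rw [← himg, hsum] at hev
    exact_mod_cast hev)
  obtain ⟨u, hu, h1, h2⟩ := hB
  refine ⟨u.image f, ?_, ?_, ?_⟩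
  · rw [← himg]; exact image_subset_image hu
  · rw [card_image_of_injective _ hf.injective, h1, hA, card_range]
  · rw [hsum, ← himg, hsum]
    simp only [add_zero] at h2
    exact_mod_cast h2

theorem exists_half {V : Type*} [Fintype V] [DecidableEq V] (d : V → ℕ) (A U : Finset ℕ)
    (hA : ∀ i, i ∈ A ↔ Odd (univ.filter fun v => d v = i).card) (hU : U ⊆ A)
    (h1 : 2 * U.card = A.card) (h2 : 2 * ∑ x ∈ U, x = ∑ x ∈ A, x) :
    ∃ S : Finset V, 2 * S.card = Fintype.card V ∧ 2 * ∑ v ∈ S, d v = ∑ v, d v := by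
  have hP : ∀ i, ∃ P ⊆ univ.filter (fun v => d v = i),
      P.card = (univ.filter fun v => d v = i).card / 2 + if i ∈ U then 1 else 0 := by
    intro i
    refine exists_subset_card_eq ?_
    split_ifs with h
    · obtain ⟨k, hk⟩ := (hA i).mp (hU h)
      omega
    · omega
  choose P hPs hPc using hP
  have h2c : ∀ i, 2 * (P i).card + (if i ∈ A then 1 else 0)
      = (univ.filter fun v => d v = i).card + 2 * (if i ∈ U then 1 else 0) := by
    intro i
    have := hPc i
    by_cases h : i ∈ A
    · obtain ⟨k, hk⟩ := (hA i).mp h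
      rw [if_pos h]
      omega
    · have hu : i ∉ U := fun hu => h (hU hu)
      have he : Even (univ.filter fun v => d v = i).card := by
        rw [← Nat.not_odd_iff_even, ← hA]; exact h
      obtain ⟨k, hk⟩ := he
      rw [if_neg h]
      omega
  set R := univ.image d with hR
  have hAR : A ⊆ R := by
    intro i hi
    obtain ⟨k, hk⟩ := (hA i).mp hi
    have : (univ.filter fun v => d v = i).Nonempty := card_pos.mp (by omega)
    obtain ⟨v, hv⟩ := this
    exact mem_image.mpr ⟨v, mem_univ _, (mem_filter.mp hv).2⟩
  have hdisj : (R : Set ℕ).PairwiseDisjoint P := by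
    intro i _ j _ hij
    change Disjoint (P i) (P j)
    rw [disjoint_left]
    intro v hv hv'
    have e1 := (mem_filter.mp (hPs i hv)).2
    have e2 := (mem_filter.mp (hPs j hv')).2
    exact hij (e1.symm.trans e2)
  -- weighted sum over fibres
  have key : ∀ w : ℕ → ℕ, 2 * ∑ i ∈ U, w i = ∑ i ∈ A, w i →
      2 * ∑ v ∈ R.biUnion P, w (d v) = ∑ v, w (d v) := by
    intro w hw
    rw [sum_biUnion hdisj]
    have e1 : ∀ i ∈ R, ∑ v ∈ P i, w (d v) = (P i).card * w i := by
      intro i _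
      rw [sum_congr rfl (g := fun _ => w i)
        (fun v hv => by rw [(mem_filter.mp (hPs i hv)).2]), sum_const, smul_eq_mul]
    rw [sum_congr rfl e1]
    have e2 : ∑ v, w (d v) = ∑ i ∈ R, (univ.filter fun v => d v = i).card * w i := by
      rw [sum_comp w d]
      simp only [smul_eq_mul, hR]
    rw [e2]
    have e3 : ∑ i ∈ R, (2 * (P i).card + (if i ∈ A then 1 else 0)) * w i
        = ∑ i ∈ R, ((univ.filter fun v => d v = i).card + 2 * (if i ∈ U then 1 else 0)) * w i :=
      sum_congr rfl fun i _ => by rw [h2c i]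
    have e4 : ∀ B ⊆ R, ∑ i ∈ R, (if i ∈ B then 1 else 0) * w i = ∑ i ∈ B, w i := by
      intro B hB
      simp only [ite_mul, one_mul, zero_mul]
      rw [← sum_filter]
      congr 1
      ext i; rw [mem_filter]; exact ⟨fun h => h.2, fun h => ⟨hB h, h⟩⟩
    simp only [add_mul, sum_add_distrib, mul_assoc, ← mul_sum] at e3
    rw [e4 A hAR, e4 U (hU.trans hAR)] at e3
    omega
  refine ⟨R.biUnion P, ?_, ?_⟩
  · have := key (fun _ => 1) (by simpa using h1)
    simpa using this
  · exact key (fun i => i) h2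

theorem parity_aux {V : Type*} [Fintype V] [DecidableEq V] (d : V → ℕ) (A : Finset ℕ)
    (hA : ∀ i, i ∈ A ↔ Odd (univ.filter fun v => d v = i).card) (w : ℕ → ℕ)
    (hw : Even (∑ v, w (d v))) : Even (∑ i ∈ A, w i) := by
  have e2 : ∑ v, w (d v) = ∑ i ∈ univ.image d, (univ.filter fun v => d v = i).card * w i := by
    rw [sum_comp w d]
    simp only [smul_eq_mul]
  have hAR : A ⊆ univ.image d := by
    intro i hi
    obtain ⟨k, hk⟩ := (hA i).mp hi
    have : (univ.filter fun v => d v = i).Nonempty := card_pos.mp (by omega)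
    obtain ⟨v, hv⟩ := this
    exact mem_image.mpr ⟨v, mem_univ _, (mem_filter.mp hv).2⟩
  rw [e2, ← sum_sdiff hAR] at hw
  have h1 : Even (∑ i ∈ univ.image d \ A, (univ.filter fun v => d v = i).card * w i) := by
    refine even_sum _ fun i hi => ?_
    rw [mem_sdiff, hA, Nat.not_odd_iff_even] at hi
    exact hi.2.mul_right _
  have h2 : Even (∑ i ∈ A, (univ.filter fun v => d v = i).card * w i + ∑ i ∈ A, w i) := by
    rw [← sum_add_distrib]
    refine even_sum _ fun i hi => ?_
    have := (hA i).mp hi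
    rw [← Nat.succ_mul]
    exact (Odd.add_one this).mul_right _
  have h3 := (Nat.even_add.mp hw).mp h1
  exact (Nat.even_add.mp h2).mp h3

/-- Let `G` be connected of diameter `2` on an even number `n ≥ 90` of vertices and
let `V_i` be the set of vertices of degree `i`.  If either the number of indices `i`
with `|V_i|` odd exceeds `n/2`, or every `|V_i|` is even, then `h(G) = n/2`. -/
theorem stmt14 {V : Type*} [Fintype V] [DecidableEq V] (G : SimpleGraph V)
    [DecidableRel G.Adj] (hG : G.Connected) (hdiam : G.diam = 2)
    (n : ℕ) (hn : Fintype.card V = n) (heven : Even n) (hbig : 90 ≤ n)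
    (hcond :
      n / 2 < {i : ℕ | Odd (Finset.univ.filter fun v => G.degree v = i).card}.ncard ∨
      ∀ i : ℕ, Even (Finset.univ.filter fun v => G.degree v = i).card) :
    homNumber G = n / 2 := by
  have hS : ∃ S : Finset V, 2 * S.card = Fintype.card V ∧
      2 * ∑ v ∈ S, G.degree v = ∑ v, G.degree v := by
    rcases hcond with h | h
    · have hlt : ∀ i, Odd (univ.filter fun v => G.degree v = i).card → 1 ≤ i ∧ i < n := by
        intro i hi
        obtain ⟨k, hk⟩ := hi
        have : (univ.filter fun v => G.degree v = i).Nonempty := card_pos.mp (by omega)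
        obtain ⟨v, hv⟩ := this
        rw [mem_filter] at hv
        rw [← hv.2, ← hn]
        haveI : Nontrivial V := Fintype.one_lt_card_iff_nontrivial.mp (by omega)
        exact ⟨hG.preconnected.degree_pos_of_nontrivial v, G.degree_lt_card_verts v⟩
      set A : Finset ℕ := (range n).filter
        (fun i => Odd (univ.filter fun v => G.degree v = i).card) with hAdef
      have hA : ∀ i, i ∈ A ↔ Odd (univ.filter fun v => G.degree v = i).card := by
        intro i
        rw [hAdef, mem_filter, mem_range]
        exact ⟨fun h => h.2, fun h => ⟨(hlt i h).2, h⟩⟩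
      have hset : {i : ℕ | Odd (Finset.univ.filter fun v => G.degree v = i).card} = (A : Set ℕ) := by
        ext i
        rw [mem_coe, hA]
        rfl
      rw [hset, Set.ncard_coe_finset] at h
      have hcardev : Even A.card := by
        have := parity_aux (fun v => G.degree v) A hA (fun _ => 1) (by simpa [hn] using heven)
        simpa using this
      have hsumev : Even (∑ i ∈ A, i) :=
        parity_aux (fun v => G.degree v) A hA (fun i => i)
          ⟨G.edgeFinset.card, by rw [G.sum_degrees_eq_twice_card_edges]; ring⟩
      obtain ⟨m, hm⟩ := hcardev
      obtain ⟨q, hq⟩ := heven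
      obtain ⟨U, hU, hU1, hU2⟩ := num_finset A (m - 1) n (by omega) (by omega) (by omega)
        (fun x hx => hlt x ((hA x).mp hx)) hsumev
      exact exists_half _ A U hA hU hU1 hU2
    · exact exists_half (fun v => G.degree v) ∅ ∅
        (fun i => by simpa using h i) (by simp) (by simp) (by simp)
  obtain ⟨S, hSc, hSd⟩ := hS
  have hhom := homometric_of_half G hG hdiam S hSc hSd
  unfold homNumber
  refine IsGreatest.csSup_eq ⟨⟨S, Sᶜ, hhom, by omega, by rw [card_compl]; omega⟩, ?_⟩
  rintro h ⟨S₁, S₂, ⟨hd, -⟩, e1, e2⟩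
  have := card_le_univ (S₁ ∪ S₂)
  rw [card_union_of_disjoint hd] at this
  omega
end

section
/- Let T be a tree, r ∈ V(T), and let S be an antichain in the r-order of T such that every vertex of S has a sibling in S. Partition S into its maximal sets of pairwise siblings, and let k′ be the number of these sets having odd size. Then 2·h(T) ≥ |S| − k′; consequently 2·h(T) ≥ (2/3)|S|. -/
open Finset

/-- The `r`-order of a tree: `x < y` iff `y ≠ x` and `y` lies on the (unique) path
from `x` to `r`. -/
def ROrderLt {V : Type*} (G : SimpleGraph V) (r x y : V) : Prop :=
  x ≠ y ∧ ∃ p : G.Walk x r, p.IsPath ∧ y ∈ p.support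

/-- `p` is the parent of `x` in the `r`-order: `p` is adjacent to `x` and lies above
`x`, i.e. `p` is the neighbor of `x` on the path from `x` to `r`. -/
def IsParentOf {V : Type*} (G : SimpleGraph V) (r p x : V) : Prop :=
  G.Adj x p ∧ ROrderLt G r x p

/-- A parent gives a path from the parent to the root avoiding the child. -/
lemma parent_path {V : Type*} (G : SimpleGraph V) {r p x : V} (h : IsParentOf G r p x) :
    ∃ w : G.Walk p r, w.IsPath ∧ x ∉ w.support := by
  classical
  obtain ⟨_, hne, w, hw, hp⟩ := h
  refine ⟨w.dropUntil p hp, hw.dropUntil hp, fun hx => ?_⟩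
  have h1 := hw.support_nodup
  rw [← w.take_spec hp, SimpleGraph.Walk.support_append, List.nodup_append'] at h1
  have h2 : x ∈ (w.dropUntil p hp).support.tail := by
    rw [SimpleGraph.Walk.mem_support_iff] at hx
    exact hx.resolve_left hne
  exact h1.2.2 (SimpleGraph.Walk.start_mem_support _) h2

lemma parent_unique {V : Type*} (G : SimpleGraph V) (hT : G.IsTree) {r p q x : V}
    (h : IsParentOf G r p x) (h' : IsParentOf G r q x) : p = q := by
  obtain ⟨w, hw, hx⟩ := parent_path G h
  obtain ⟨w', hw', hx'⟩ := parent_path G h'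
  have e := (hT.existsUnique_path x r).unique
    (hw.cons (h := h.1) hx) (hw'.cons (h := h'.1) hx')
  have := congrArg SimpleGraph.Walk.snd e
  simpa using this

lemma path_len {V : Type*} (G : SimpleGraph V) (hT : G.IsTree) {u v : V}
    (w : G.Walk u v) (hw : w.IsPath) : w.length = G.dist u v := by
  obtain ⟨q, hq, hl⟩ := hT.1.exists_path_of_dist u v
  rw [(hT.existsUnique_path u v).unique hw hq, hl]

lemma dist_parent {V : Type*} (G : SimpleGraph V) (hT : G.IsTree) {r p x z : V}
    (h : IsParentOf G r p x) (hzx : z ≠ x) (hlt : ¬ ROrderLt G r z x) :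
    G.dist z x = G.dist z p + 1 := by
  classical
  obtain ⟨w, hw, hx⟩ := parent_path G h
  obtain ⟨P, hP, -⟩ := hT.existsUnique_path z r
  have hxP : x ∉ P.support := fun hxP => hlt ⟨hzx, P, hP, hxP⟩
  have hb : x ∉ (P.append w.reverse).bypass.support := by
    intro hm
    have := SimpleGraph.Walk.support_bypass_subset_support _ hm
    rw [SimpleGraph.Walk.mem_support_append_iff] at this
    simp [hx, hxP] at this
  have hbp := SimpleGraph.Walk.bypass_isPath (P.append w.reverse)
  have hc := hbp.concat hb h.1.symm
  rw [← path_len G hT _ hc, ← path_len G hT _ hbp, SimpleGraph.Walk.length_concat]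

lemma pairing {V : Type*} [Fintype V] [DecidableEq V] (par : V → V) (n : ℕ) : ∀ S : Finset V,
    S.card = n → ∃ (A : Finset V) (f : V → V), A ⊆ S ∧ Set.InjOn f A ∧
      (∀ x ∈ A, f x ∈ S ∧ f x ∉ A ∧ par (f x) = par x) ∧
      S.card ≤ 2 * A.card + (univ.filter fun p => Odd (S.filter fun x => par x = p).card).card := by
  induction n using Nat.strong_induction_on with
  | _ n ih =>
  intro S hS
  by_cases hinj : ∀ x ∈ S, ∀ y ∈ S, par x = par y → x = y
  · refine ⟨∅, id, by simp, by simp, by simp, ?_⟩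
    simp only [card_empty, mul_zero, zero_add]
    rw [← card_image_of_injOn (s := S) (f := par) (fun x hx y hy h => hinj x hx y hy h)]
    apply card_le_card
    intro p hp
    obtain ⟨x, hx, rfl⟩ := mem_image.1 hp
    have : (S.filter fun y => par y = par x) = {x} := by
      ext y
      simp only [mem_filter, mem_singleton]
      exact ⟨fun h => hinj y h.1 x hx h.2, fun h => by subst h; exact ⟨hx, rfl⟩⟩
    simp [this]
  · push Not at hinj
    obtain ⟨x, hx, y, hy, hpar, hne⟩ := hinj
    set S' := (S.erase x).erase y with hS'
    have hyx : y ∈ S.erase x := mem_erase.2 ⟨hne.symm, hy⟩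
    have hc1 := card_erase_add_one hx
    have hc2 := card_erase_add_one hyx
    rw [← hS'] at hc2
    obtain ⟨A, f, hA, hf, hfA, hcard⟩ := ih S'.card (by omega) S' rfl
    have hxS' : x ∉ S' := by simp [hS']
    have hyS' : y ∉ S' := by simp [hS']
    have hsub : S' ⊆ S := (erase_subset _ _).trans (erase_subset _ _)
    have hxA : x ∉ A := fun h => hxS' (hA h)
    have hyA : y ∉ A := fun h => hyS' (hA h)
    have hparity : ∀ p, Odd (S.filter fun x => par x = p).card ↔
        Odd (S'.filter fun x => par x = p).card := by
      intro p
      have hSS : S = insert x (insert y S') := by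
        rw [hS', insert_erase hyx, insert_erase hx]
      rw [hSS, filter_insert, filter_insert, ← hpar]
      by_cases hp : par x = p
      · simp only [hp, if_true]
        rw [card_insert_of_notMem (by simp [hne, hxS']), card_insert_of_notMem (by simp [hyS'])]
        simp [Nat.odd_add_one]
      · simp [hp]
    refine ⟨insert x A, Function.update f x y, ?_, ?_, ?_, ?_⟩
    · exact insert_subset hx (hA.trans hsub)
    · intro a ha b hb hab
      simp only [coe_insert, Set.mem_insert_iff, mem_coe] at ha hb
      rcases ha with rfl | ha <;> rcases hb with rfl | hb
      · rfl
      · have hba : b ≠ a := fun h => hxA (h ▸ hb)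
        simp only [Function.update_self, Function.update_of_ne hba] at hab
        exact absurd (hab ▸ (hfA b hb).1) hyS'
      · have hba : a ≠ b := fun h => hxA (h ▸ ha)
        simp only [Function.update_self, Function.update_of_ne hba] at hab
        exact absurd (hab ▸ (hfA a ha).1) hyS'
      · have h1 : a ≠ x := fun h => hxA (h ▸ ha)
        have h2 : b ≠ x := fun h => hxA (h ▸ hb)
        rw [Function.update_of_ne h1, Function.update_of_ne h2] at hab
        exact hf ha hb hab
    · intro a ha
      rcases mem_insert.1 ha with rfl | ha
      · simp only [Function.update_self]
        exact ⟨hy, by simp [hne.symm, hyA], hpar.symm⟩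
      · have h1 : a ≠ x := fun h => hxA (h ▸ ha)
        rw [Function.update_of_ne h1]
        obtain ⟨h2, h3, h4⟩ := hfA a ha
        refine ⟨hsub h2, ?_, h4⟩
        rw [mem_insert, not_or]
        exact ⟨fun h => hxS' (h ▸ h2), h3⟩
    · rw [card_insert_of_notMem hxA]
      simp only [hparity]
      omega

lemma distMultiset_image {V : Type*} [inst : DecidableEq V] (G : SimpleGraph V) (A : Finset V) (f : V → V)
    (hf : Set.InjOn f A)
    (hd : ∀ x ∈ A, ∀ y ∈ A, x ≠ y → G.dist (f x) (f y) = G.dist x y) :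
    distMultiset G A = distMultiset G (A.image f) := by
  obtain rfl : inst = Classical.decEq V := Subsingleton.elim _ _
  letI : DecidableEq V := Classical.decEq V
  unfold distMultiset
  have e : ((A.image f).sym2.filter fun p => ¬ p.IsDiag) =
      (A.sym2.filter fun p => ¬ p.IsDiag).image (Sym2.map f) := by
    rw [sym2_image, filter_image]
    congr 1
    ext p
    induction p using Sym2.ind with
    | _ x y =>
    simp only [mem_filter, mk_mem_sym2_iff, Sym2.map_mk, Sym2.mk_isDiag_iff]
    constructor
    · rintro ⟨⟨hx, hy⟩, h⟩
      exact ⟨⟨hx, hy⟩, fun h' => h (by rw [h'])⟩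
    · rintro ⟨⟨hx, hy⟩, h⟩
      exact ⟨⟨hx, hy⟩, fun h' => h (hf hx hy h')⟩
  rw [e, image_val_of_injOn, Multiset.map_map]
  · apply Multiset.map_congr rfl
    intro p hp
    induction p using Sym2.ind with
    | _ x y =>
    rw [mem_val, mem_filter, mk_mem_sym2_iff, Sym2.mk_isDiag_iff] at hp
    simp [hd x hp.1.1 y hp.1.2 hp.2]
  · intro p hp q hq h
    induction p using Sym2.ind with
    | _ x y =>
    induction q using Sym2.ind with
    | _ a b =>
    simp only [coe_filter, Set.mem_setOf_eq, mk_mem_sym2_iff] at hp hq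
    simp only [Sym2.map_mk, Sym2.eq_iff] at h ⊢
    rcases h with ⟨h1, h2⟩ | ⟨h1, h2⟩
    · exact Or.inl ⟨hf hp.1.1 hq.1.1 h1, hf hp.1.2 hq.1.2 h2⟩
    · exact Or.inr ⟨hf hp.1.1 hq.1.2 h1, hf hp.1.2 hq.1.1 h2⟩

/-- Let `T` be a tree, `r` a vertex, and `S` an antichain in the `r`-order such that
every vertex of `S` has a sibling in `S`.  If `k'` is the number of maximal sets of
pairwise siblings of `S` (that is, nonempty fibers of the parent map on `S`) having odd
size, then `2·h(T) ≥ |S| − k'`; consequently `2·h(T) ≥ (2/3)·|S|`. -/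
theorem stmt16 {V : Type*} [Fintype V] (G : SimpleGraph V) (hT : G.IsTree) (r : V)
    (S : Finset V)
    (hanti : ∀ x ∈ S, ∀ y ∈ S, ¬ ROrderLt G r x y)
    (hsib : ∀ x ∈ S, ∃ y ∈ S, y ≠ x ∧ ∃ p : V, IsParentOf G r p x ∧ IsParentOf G r p y)
    (k' : ℕ)
    (hk' : k' = {p : V | Odd {x : V | x ∈ S ∧ IsParentOf G r p x}.ncard}.ncard) :
    (S.card : ℝ) - k' ≤ 2 * homNumber G ∧
      (2 / 3 : ℝ) * S.card ≤ 2 * homNumber G := by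
  classical
  have hex : ∀ x : V, ∃ p : V, x ∈ S → IsParentOf G r p x := by
    intro x
    by_cases hx : x ∈ S
    · obtain ⟨y, _, _, p, hp, _⟩ := hsib x hx
      exact ⟨p, fun _ => hp⟩
    · exact ⟨x, fun h => absurd h hx⟩
  choose par hpar using hex
  have hfib : ∀ p, {x : V | x ∈ S ∧ IsParentOf G r p x}.ncard =
      (S.filter fun x => par x = p).card := by
    intro p
    rw [← Set.ncard_coe_finset]
    congr 1
    ext x
    simp only [Set.mem_setOf_eq, coe_filter]
    constructor
    · rintro ⟨hx, h⟩
      exact ⟨hx, parent_unique G hT (hpar x hx) h⟩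
    · rintro ⟨hx, h⟩
      exact ⟨hx, h ▸ hpar x hx⟩
  set K := univ.filter fun p => Odd (S.filter fun x => par x = p).card with hK
  have hkK : k' = K.card := by
    rw [hk', ← Set.ncard_coe_finset]
    congr 1
    ext p
    simp [hK, hfib]
  obtain ⟨A, f, hA, hf, hfA, hcard⟩ := pairing par S.card S rfl
  have hdist : ∀ x ∈ S, ∀ y ∈ S, ∀ z ∈ S, par x = par y → z ≠ x → z ≠ y →
      G.dist z x = G.dist z y := by
    intro x hx y hy z hz hxy hzx hzy
    rw [dist_parent G hT (hpar x hx) hzx (hanti z hz x hx),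
      dist_parent G hT (hpar y hy) hzy (hanti z hz y hy), hxy]
  have hhom : Homometric G A (A.image f) := by
    refine ⟨?_, distMultiset_image G A f hf ?_⟩
    · rw [disjoint_left]
      intro a ha hb
      obtain ⟨b, hbA, rfl⟩ := mem_image.1 hb
      exact (hfA b hbA).2.1 ha
    · intro x hx y hy hxy
      obtain ⟨hx1, hx2, hx3⟩ := hfA x hx
      obtain ⟨hy1, hy2, hy3⟩ := hfA y hy
      rw [hdist (f y) hy1 y (hA hy) (f x) hx1 hy3 (fun h => hxy (hf hx hy h))
        (fun h => hx2 (h ▸ hy)), SimpleGraph.dist_comm,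
        hdist (f x) hx1 x (hA hx) y (hA hy) hx3 (fun h => hx2 (h ▸ hy)) hxy.symm,
        SimpleGraph.dist_comm]
  have hle : A.card ≤ homNumber G := by
    apply le_csSup
    · refine ⟨Fintype.card V, ?_⟩
      rintro h ⟨S₁, S₂, _, h1, _⟩
      rw [← h1]
      exact card_le_univ _
    · exact ⟨A, A.image f, hhom, rfl, card_image_of_injOn hf⟩
  have h3 : 3 * K.card ≤ S.card := by
    rw [card_eq_sum_card_fiberwise (f := par) (s := S) (t := univ) (by intro x _; simp)]
    calc 3 * K.card = ∑ p ∈ K, 3 := by rw [sum_const, smul_eq_mul, mul_comm]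
      _ ≤ ∑ p ∈ K, (S.filter fun x => par x = p).card := by
        apply sum_le_sum
        intro p hp
        have hodd : Odd (S.filter fun x => par x = p).card := (mem_filter.1 hp).2
        obtain ⟨x, hx⟩ := card_pos.1 hodd.pos
        obtain ⟨hxS, hxp⟩ := mem_filter.1 hx
        obtain ⟨y, hy, hyx, q, hq1, hq2⟩ := hsib x hxS
        have hyp : par y = p := by
          rw [← hxp, parent_unique G hT (hpar y hy) hq2, parent_unique G hT (hpar x hxS) hq1]
        have : 1 < (S.filter fun x => par x = p).card :=
          one_lt_card.2 ⟨x, hx, y, mem_filter.2 ⟨hy, hyp⟩, hyx.symm⟩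
        obtain ⟨m, hm⟩ := hodd
        omega
      _ ≤ _ := sum_le_sum_of_subset (subset_univ _)
  have h1 : (S.card : ℝ) ≤ 2 * A.card + K.card := by exact_mod_cast hcard
  have h2 : (A.card : ℝ) ≤ homNumber G := by exact_mod_cast hle
  have h4 : 3 * (K.card : ℝ) ≤ S.card := by exact_mod_cast h3
  rw [hkK]
  constructor <;> linarith
end

section
/- For every tree T on n ≥ 2 vertices: (a) d₁(T) − bad(T) ≥ 2 + Σ_{i≥4} d_i(T); (b) d₁(T) ≥ (2/3)(n − d₂(T) − d₃(T)); and (c) Σ_{i≥4} d_i(T) ≤ (1/3)(n − d₂(T) − d₃(T)). -/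
open Finset

/-- `C` is a pendent path of the vertex `x`: a connected component of `G − x` that is a
path (equivalently, since `G` is a tree, each of its vertices has at most two neighbors
inside it). -/
def IsPendentPath {V : Type*} (G : SimpleGraph V) (x : V) (C : Set V) : Prop :=
  x ∉ C ∧ C.Nonempty ∧ (∀ y ∈ C, ∀ z : V, G.Adj y z → z ≠ x → z ∈ C) ∧
    (G.induce C).Connected ∧ ∀ y ∈ C, {z : V | z ∈ C ∧ G.Adj y z}.ncard ≤ 2

/-- A bad vertex: a vertex of degree at least `3` with an odd number of pendent paths. -/
def IsBadVertex {V : Type*} [Fintype V] (G : SimpleGraph V) [DecidableRel G.Adj]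
    (x : V) : Prop :=
  3 ≤ G.degree x ∧ Odd {C : Set V | IsPendentPath G x C}.ncard

/-- For every tree `T` on `n ≥ 2` vertices, with `d_i` the number of vertices of
degree `i`: (a) `d₁ − bad(T) ≥ 2 + Σ_{i≥4} d_i`; (b) `d₁ ≥ (2/3)(n − d₂ − d₃)`;
(c) `Σ_{i≥4} d_i ≤ (1/3)(n − d₂ − d₃)`. -/
theorem stmt18 {V : Type*} [Fintype V] (G : SimpleGraph V) [DecidableRel G.Adj]
    (hT : G.IsTree) (n : ℕ) (hn : Fintype.card V = n) (h2 : 2 ≤ n)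
    (d : ℕ → ℕ) (hd : ∀ i, d i = {v : V | G.degree v = i}.ncard)
    (bad d4 : ℕ)
    (hbad : bad = {x : V | IsBadVertex G x}.ncard)
    (hd4 : d4 = {v : V | 4 ≤ G.degree v}.ncard) :
    ((2 : ℤ) + d4 ≤ (d 1 : ℤ) - bad) ∧
    ((2 / 3 : ℝ) * ((n : ℝ) - d 2 - d 3) ≤ d 1) ∧
    ((d4 : ℝ) ≤ (1 / 3 : ℝ) * ((n : ℝ) - d 2 - d 3)) := by
  classical
  have hcard : ∀ (p : V → Prop) [DecidablePred p], {v : V | p v}.ncard = ∑ v : V, if p v then 1 else 0 := by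
    intro p _
    rw [Set.ncard_eq_toFinset_card', Finset.sum_boole]
    simp
  have hb : bad ≤ ∑ v : V, if 3 ≤ G.degree v then 1 else 0 := by
    rw [hbad, ← hcard (fun v => 3 ≤ G.degree v)]
    exact Set.ncard_le_ncard (fun x hx => hx.1) (Set.toFinite _)
  have hsum : ∑ v : V, G.degree v = 2 * G.edgeFinset.card := G.sum_degrees_eq_twice_card_edges
  have he : G.edgeFinset.card + 1 = Fintype.card V := hT.card_edgeFinset
  have : Nontrivial V := Fintype.one_lt_card_iff_nontrivial.mp (by omega)
  have hpos : ∀ v, 0 < G.degree v := fun v => hT.connected.preconnected.degree_pos_of_nontrivial v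
  have hV : ∑ v : V, 1 = n := by simp [hn]
  have h1 : ∑ v : V, (2 * 1 + (if 3 ≤ G.degree v then 1 else 0)
      + (if 4 ≤ G.degree v then 1 else 0)) ≤
      ∑ v : V, (G.degree v + if G.degree v = 1 then 1 else 0) := by
    refine Finset.sum_le_sum fun v _ => ?_
    have := hpos v
    split_ifs <;> omega
  have h3 : ∑ v : V, 1 = ∑ v : V, ((if G.degree v = 1 then 1 else 0)
      + (if G.degree v = 2 then 1 else 0) + (if G.degree v = 3 then 1 else 0)
      + (if 4 ≤ G.degree v then 1 else 0)) := by
    refine Finset.sum_congr rfl fun v _ => ?_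
    have := hpos v
    split_ifs <;> omega
  have h5 : ∑ v : V, ((if G.degree v = 3 then 1 else 0) + (if 4 ≤ G.degree v then 1 else 0))
      = ∑ v : V, if 3 ≤ G.degree v then 1 else 0 := by
    refine Finset.sum_congr rfl fun v _ => ?_
    split_ifs <;> omega
  have e1 := (hd 1).trans (hcard fun v => G.degree v = 1)
  have e2 := (hd 2).trans (hcard fun v => G.degree v = 2)
  have e3 := (hd 3).trans (hcard fun v => G.degree v = 3)
  have e4 := hd4.trans (hcard fun v => 4 ≤ G.degree v)
  simp only [Finset.sum_add_distrib, ← Finset.mul_sum, ← e1, ← e2, ← e3, ← e4] at h1 h3 h5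
  rw [hV] at h1 h3
  have hA : 2 + d 3 + 2 * d4 ≤ d 1 := by omega
  have hA' : (2 : ℝ) + d 3 + 2 * d4 ≤ d 1 := by exact_mod_cast hA
  have hN : (n : ℝ) = d 1 + d 2 + d 3 + d4 := by exact_mod_cast h3
  have h30 : (0 : ℝ) ≤ d 3 := by positivity
  refine ⟨by omega, by linarith, by linarith⟩
end

section
/- For every tree T on n ≥ 2 vertices, h(T) ≥ (n − d₂(T) − 4·d₃(T))/6 and h(T) ≥ (n − d₁(T) − d₂(T))/(2·diam(T)). -/
open Finset

/-- A pair of equal-size disjoint isometric families bounds the homometric number below. -/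
theorem le_homNumber_of_family {V : Type*} [Fintype V] (G : SimpleGraph V) {ι : Type*} [Fintype ι]
    (α β : ι → V) (hα : Function.Injective α) (hβ : Function.Injective β)
    (hd : ∀ i j, α i ≠ β j) (hdist : ∀ i j, G.dist (α i) (α j) = G.dist (β i) (β j)) :
    Fintype.card ι ≤ homNumber G := by
  classical
  apply le_csSup
  · refine ⟨Fintype.card V, ?_⟩
    rintro h ⟨S₁, S₂, -, h1, -⟩
    rw [← h1]
    exact Finset.card_le_univ _
  · refine ⟨Finset.univ.map ⟨α, hα⟩, Finset.univ.map ⟨β, hβ⟩, ⟨?_, ?_⟩, by simp, by simp⟩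
    · rw [Finset.disjoint_left]
      simp only [Finset.mem_map, Finset.mem_univ, true_and, Function.Embedding.coeFn_mk]
      rintro v ⟨i, rfl⟩ ⟨j, hj⟩
      exact hd i j hj.symm
    · have key : ∀ (γ : ι → V) (hγ : Function.Injective γ),
          distMultiset G (Finset.univ.map ⟨γ, hγ⟩) =
          ((Finset.univ : Finset (Sym2 ι)).filter fun p => ¬ p.IsDiag).val.map
            (Sym2.lift ⟨fun a b => G.dist (γ a) (γ b), fun _ _ => SimpleGraph.dist_comm⟩) := by
        intro γ hγ
        have : ((Finset.univ.map ⟨γ, hγ⟩ : Finset V).sym2.filter fun p => ¬ p.IsDiag)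
          = ((Finset.univ : Finset (Sym2 ι)).filter fun p => ¬ p.IsDiag).map
            ⟨Sym2.map γ, Sym2.map.injective hγ⟩ := by
          ext p
          induction p using Sym2.ind with
          | _ a b =>
            simp only [Finset.mem_filter, Finset.mk_mem_sym2_iff, Finset.mem_map, Finset.mem_univ,
              true_and, Function.Embedding.coeFn_mk, Sym2.mk_isDiag_iff]
            constructor
            · rintro ⟨⟨⟨i, rfl⟩, ⟨j, rfl⟩⟩, hne⟩
              exact ⟨s(i, j), by simpa using fun h => hne (by rw [h]), by simp⟩
            · rintro ⟨q, hq, hqe⟩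
              induction q using Sym2.ind with
              | _ i j =>
                simp only [Sym2.map_mk, Sym2.eq_iff, Sym2.mk_isDiag_iff] at hqe hq
                rcases hqe with ⟨rfl, rfl⟩ | ⟨rfl, rfl⟩
                · exact ⟨⟨⟨_, rfl⟩, ⟨_, rfl⟩⟩, fun h => hq (hγ h)⟩
                · exact ⟨⟨⟨_, rfl⟩, ⟨_, rfl⟩⟩, fun h => hq (hγ h).symm⟩
        unfold distMultiset
        have e : ∀ (i1 : DecidableEq V) (S : Finset V),
          (@Finset.filter _ (fun p : Sym2 V => ¬ p.IsDiag)
            (fun p => @instDecidableNot _ (@Sym2.IsDiag.decidablePred _ i1 p)) S.sym2)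
          = S.sym2.filter fun p => ¬ p.IsDiag := by
          intro i1 S
          congr!
        rw [e, this, Finset.map_val, Multiset.map_map]
        apply Multiset.map_congr rfl
        intro p _
        induction p using Sym2.ind with
        | _ a b => rfl
      rw [key, key]
      apply Multiset.map_congr rfl
      intro p _
      induction p using Sym2.ind with
      | _ a b => exact hdist a b

/-- Pairing up within the fibres of `π`. -/
theorem sum_half_le_homNumber {V : Type*} [Fintype V] [DecidableEq V] (G : SimpleGraph V)
    (A : Finset V) (π : V → V)
    (h : ∀ a ∈ A, ∀ b ∈ A, a ≠ b → G.dist a b = G.dist (π a) (π b) + 2) :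
    ∑ x, #{a ∈ A | π a = x} / 2 ≤ homNumber G := by
  let F : V → Finset V := fun x => {a ∈ A | π a = x}
  let e : ∀ x, Fin (#(F x)) ≃ F x := fun x => (F x).equivFin.symm
  have hF : ∀ x (i : Fin (#(F x))), ((e x i : F x) : V) ∈ A ∧ π (e x i) = x := by
    intro x i
    have := (e x i).2
    exact Finset.mem_filter.1 this
  have inj : ∀ x y (i : Fin (#(F x))) (j : Fin (#(F y))), ((e x i : F x) : V) = (e y j : F y) →
      x = y ∧ (i : ℕ) = j := by
    intro x y i j hij
    have hxy : x = y := by rw [← (hF x i).2, hij, (hF y j).2]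
    subst hxy
    refine ⟨rfl, ?_⟩
    rw [(e x).injective (Subtype.ext hij)]
  let α : (Σ x : V, Fin (#(F x) / 2)) → V := fun p =>
    (e p.1 ⟨p.2, by have := p.2.2; omega⟩ : F p.1)
  let β : (Σ x : V, Fin (#(F x) / 2)) → V := fun p =>
    (e p.1 ⟨#(F p.1) / 2 + p.2, by have := p.2.2; omega⟩ : F p.1)
  have hα : Function.Injective α := by
    rintro ⟨x, i⟩ ⟨y, j⟩ hij
    obtain ⟨rfl, h2⟩ := inj _ _ _ _ hij
    simp only at h2
    rw [Fin.ext h2]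
  have hβ : Function.Injective β := by
    rintro ⟨x, i⟩ ⟨y, j⟩ hij
    obtain ⟨rfl, h2⟩ := inj _ _ _ _ hij
    simp only at h2
    rw [Fin.ext (by omega : (i : ℕ) = j)]
  have := le_homNumber_of_family G α β hα hβ ?_ ?_
  · simpa using this
  · rintro ⟨x, i⟩ ⟨y, j⟩ hij
    obtain ⟨rfl, h2⟩ := inj _ _ _ _ hij
    simp only at h2
    have := i.2
    omega
  · intro p q
    by_cases hpq : p = q
    · subst hpq; simp
    · rw [h _ (hF _ _).1 _ (hF _ _).1 (fun hh => hpq (hα hh)),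
        h _ (hF _ _).1 _ (hF _ _).1 (fun hh => hpq (hβ hh))]
      rw [(hF _ _).2, (hF _ _).2, (hF _ _).2, (hF _ _).2]

theorem exists_closer {V : Type*} {G : SimpleGraph V} (hT : G.IsTree) {v y : V} (h : v ≠ y) :
    ∃ u, G.Adj v u ∧ G.dist v y = G.dist u y + 1 := by
  obtain ⟨p, hp⟩ := hT.connected.exists_walk_length_eq_dist v y
  cases p with
  | nil => exact absurd rfl h
  | cons hadj q =>
    rename_i u
    refine ⟨u, hadj, ?_⟩
    have h1 := SimpleGraph.dist_le q
    simp only [SimpleGraph.Walk.length_cons] at hp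
    have h2 := hT.dist_eq_dist_add_one_of_adj y hadj
    rw [SimpleGraph.dist_comm, SimpleGraph.dist_comm (u := y)] at h2
    omega

theorem closer_or {V : Type*} {G : SimpleGraph V} (hT : G.IsTree) {u v : V} (h : G.Adj u v) (y : V) :
    G.dist u y = G.dist v y + 1 ∨ G.dist v y = G.dist u y + 1 := by
  have h2 := hT.dist_eq_dist_add_one_of_adj y h
  rwa [SimpleGraph.dist_comm, SimpleGraph.dist_comm (u := y)] at h2

theorem closer_unique {V : Type*} {G : SimpleGraph V} (hT : G.IsTree) {v u u' y : V}
    (h : G.Adj v u) (h' : G.Adj v u') (hu : G.dist u y < G.dist v y)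
    (hu' : G.dist u' y < G.dist v y) : u = u' := by
  obtain ⟨p, hp⟩ := hT.connected.exists_walk_length_eq_dist u y
  obtain ⟨p', hp'⟩ := hT.connected.exists_walk_length_eq_dist u' y
  have e := closer_or hT h y
  have e' := closer_or hT h' y
  have h1 : (SimpleGraph.Walk.cons h p).IsPath :=
    SimpleGraph.Walk.isPath_of_length_eq_dist _ (by simp only [SimpleGraph.Walk.length_cons]; omega)
  have h2 : (SimpleGraph.Walk.cons h' p').IsPath :=
    SimpleGraph.Walk.isPath_of_length_eq_dist _ (by simp only [SimpleGraph.Walk.length_cons]; omega)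
  have h3 := (hT.existsUnique_path v y).unique h1 h2
  have := congrArg SimpleGraph.Walk.snd h3
  simpa using this

/-- Only one edge crosses the cut defined by an edge of a tree. -/
theorem cut_edge {V : Type*} {G : SimpleGraph V} (hT : G.IsTree) {a x u v : V}
    (h : G.Adj a x) (h' : G.Adj u v) (hu : G.dist a u < G.dist x u)
    (hv : G.dist x v < G.dist a v) : u = a := by
  by_contra hne
  obtain ⟨w, hw, hwd⟩ := exists_closer hT (v := a) (y := u) (fun e => hne e.symm)
  have e1 := closer_or hT h u
  have e2 := closer_or hT h v
  have e3 := hT.dist_eq_dist_add_one_of_adj a h'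
  have e4 := hT.dist_eq_dist_add_one_of_adj x h'
  have e5 := hT.dist_eq_dist_add_one_of_adj w h'
  have : w = x := closer_unique hT (y := v) hw h (by omega) hv
  subst this
  omega

theorem dist_add_two {V : Type*} {G : SimpleGraph V} (hT : G.IsTree) {a x a' x' : V}
    (h : G.Adj a x) (h' : G.Adj a' x') (hne : a ≠ a')
    (h1 : ¬ G.dist a x' < G.dist x x') (h2 : ¬ G.dist a' x < G.dist x' x) :
    G.dist a a' = G.dist x x' + 2 := by
  have e1 := closer_or hT h x'
  have e2 := closer_or hT h' a
  have e3 := closer_or hT h' x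
  have h3 : ¬ G.dist a' a < G.dist x' a := fun h4 =>
    hne (cut_edge hT h' h h4 (by omega))
  have c1 : G.dist a x' = G.dist x' a := SimpleGraph.dist_comm
  have c2 : G.dist a a' = G.dist a' a := SimpleGraph.dist_comm
  omega

/-- A parent function for the tree rooted at `r`. -/
theorem exists_parent {V : Type*} {G : SimpleGraph V} (hT : G.IsTree) (r : V) :
    ∃ par : V → V, ∀ v, v ≠ r → G.Adj v (par v) ∧ G.dist v r = G.dist (par v) r + 1 ∧
      ∀ u, G.Adj v u → u ≠ par v → u ≠ r ∧ par u = v := by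
  have : ∀ v, ∃ u, v ≠ r → G.Adj v u ∧ G.dist v r = G.dist u r + 1 := by
    intro v
    by_cases hv : v = r
    · exact ⟨v, fun h => absurd hv h⟩
    · obtain ⟨u, hu⟩ := exists_closer hT hv
      exact ⟨u, fun _ => hu⟩
  choose par hpar using this
  refine ⟨par, fun v hv => ⟨(hpar v hv).1, (hpar v hv).2, fun u hu hne => ?_⟩⟩
  have h1 := hpar v hv
  have e := closer_or hT hu r
  have h2 : ¬ G.dist u r < G.dist v r := fun h3 =>
    hne (closer_unique hT hu h1.1 h3 (by omega))
  have h3 : u ≠ r := by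
    rintro rfl
    have := hT.connected.pos_dist_of_ne hv
    rw [SimpleGraph.dist_self] at h2
    omega
  have h4 := hpar u h3
  exact ⟨h3, closer_unique hT (y := r) h4.1 hu.symm (by omega) (by omega)⟩

theorem root_child {V : Type*} {G : SimpleGraph V} (hT : G.IsTree) {r : V} {par : V → V}
    (hpar : ∀ v, v ≠ r → G.Adj v (par v) ∧ G.dist v r = G.dist (par v) r + 1 ∧
      ∀ u, G.Adj v u → u ≠ par v → u ≠ r ∧ par u = v) {u : V} (hu : G.Adj r u) :
    u ≠ r ∧ par u = r := by
  have h := hpar u hu.ne'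
  refine ⟨hu.ne', ?_⟩
  have h1 : G.dist u r = 1 := SimpleGraph.dist_eq_one_iff_adj.2 hu.symm
  exact hT.connected.dist_eq_zero_iff.1 (by omega)

theorem depth_of_below {V : Type*} {G : SimpleGraph V} (hT : G.IsTree) {r : V} {par : V → V}
    (hpar : ∀ v, v ≠ r → G.Adj v (par v) ∧ G.dist v r = G.dist (par v) r + 1 ∧
      ∀ u, G.Adj v u → u ≠ par v → u ≠ r ∧ par u = v) {a : V} (ha : a ≠ r) :
    ∀ (k : ℕ) (y : V), G.dist y r = k → G.dist a y < G.dist (par a) y →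
      G.dist a r ≤ G.dist y r := by
  intro k
  induction k using Nat.strong_induction_on with
  | _ k ih =>
    intro y hk hy
    by_cases hya : y = a
    · rw [hya]
    have hyr : y ≠ r := by
      rintro rfl
      have := (hpar a ha).2.1
      omega
    have h := hpar y hyr
    have h2 : G.dist a (par y) < G.dist (par a) (par y) := by
      by_contra hcon
      have := closer_or hT (hpar a ha).1 (par y)
      exact hya (cut_edge hT (hpar a ha).1 h.1 hy (by omega))
    have := ih (G.dist (par y) r) (by omega) (par y) rfl h2
    omega

theorem tree_degree_sum {V : Type*} [Fintype V] {G : SimpleGraph V} [DecidableRel G.Adj]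
    (hT : G.IsTree) : ∑ v, G.degree v + 2 = 2 * Fintype.card V := by
  classical
  have h1 := hT.card_edgeFinset
  have h2 := G.sum_degrees_eq_twice_card_edges
  omega

theorem tree_degree_pos {V : Type*} [Fintype V] {G : SimpleGraph V} [DecidableRel G.Adj]
    (hT : G.IsTree) (h2 : 2 ≤ Fintype.card V) (v : V) : 1 ≤ G.degree v := by
  have : Nontrivial V := Fintype.one_lt_card_iff_nontrivial.1 (by omega)
  exact hT.connected.preconnected.degree_pos_of_nontrivial v

theorem part_two {V : Type*} [Fintype V] {G : SimpleGraph V} [DecidableRel G.Adj]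
    (hT : G.IsTree) (h2 : 2 ≤ Fintype.card V) :
    #{v | 3 ≤ G.degree v} ≤ 2 * G.diam * homNumber G := by
  classical
  have : Nontrivial V := Fintype.one_lt_card_iff_nontrivial.1 (by omega)
  obtain ⟨r⟩ : Nonempty V := inferInstance
  obtain ⟨par, hpar⟩ := exists_parent hT r
  have htop : G.ediam ≠ ⊤ := SimpleGraph.connected_iff_ediam_ne_top.1 hT.connected
  obtain ⟨s, hs⟩ := exists_ne r
  have hdpos : 1 ≤ G.diam := by
    have h1 := hT.connected.pos_dist_of_ne hs
    have h2 := SimpleGraph.dist_le_diam htop (u := s) (v := r)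
    omega
  have hlayer : ∀ k, #{v | 3 ≤ G.degree v ∧ G.dist v r = k} ≤ homNumber G := by
    intro k
    let A : Finset V := {a | a ≠ r ∧ G.dist (par a) r = k}
    have hA := sum_half_le_homNumber G A par (by
      intro a ha b hb hne
      simp only [A, Finset.mem_filter, Finset.mem_univ, true_and] at ha hb
      have h1 := hpar a ha.1
      have h2 := hpar b hb.1
      refine dist_add_two hT h1.1 h2.1 hne ?_ ?_
      · intro h3
        have := depth_of_below hT hpar ha.1 _ _ rfl h3
        omega
      · intro h3
        have := depth_of_below hT hpar hb.1 _ _ rfl h3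
        omega)
    refine le_trans ?_ hA
    rw [Finset.card_filter]
    apply Finset.sum_le_sum
    intro x _
    split_ifs with hx
    · have : G.neighborFinset x ⊆ insert (par x) {a ∈ A | par a = x} := by
        intro u hu
        rw [SimpleGraph.mem_neighborFinset] at hu
        by_cases hux : u = par x
        · simp [hux]
        · have h5 : u ≠ r ∧ par u = x := by
            by_cases hxr : x = r
            · subst hxr; exact root_child hT hpar hu
            · exact (hpar x hxr).2.2 u hu hux
          simp [A, h5, hx.2]
      have h6 := Finset.card_le_card this
      have h7 := Finset.card_insert_le (par x) {a ∈ A | par a = x}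
      rw [SimpleGraph.card_neighborFinset_eq_degree] at h6
      omega
    · omega
  calc #{v | 3 ≤ G.degree v} = ∑ k ∈ Finset.range (G.diam + 1), #{v ∈ ({v | 3 ≤ G.degree v} : Finset V) | G.dist v r = k} := by
        apply Finset.card_eq_sum_card_fiberwise
        intro v _
        simp only [Finset.coe_range, Set.mem_Iio]
        have := SimpleGraph.dist_le_diam htop (u := v) (v := r)
        omega
    _ ≤ ∑ k ∈ Finset.range (G.diam + 1), homNumber G := by
        apply Finset.sum_le_sum
        intro k _
        rw [Finset.filter_filter]
        exact hlayer k
    _ = (G.diam + 1) * homNumber G := by simp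
    _ ≤ _ := Nat.mul_le_mul_right _ (by omega)

/-- The vertices starting pendant paths. -/
theorem part_one {V : Type*} [Fintype V] {G : SimpleGraph V} [DecidableRel G.Adj]
    (hT : G.IsTree) (h2 : 2 ≤ Fintype.card V) :
    Fintype.card V ≤ 6 * homNumber G + #{v | G.degree v = 2} + 4 * #{v | G.degree v = 3} := by
  classical
  have hsum := tree_degree_sum hT
  have hpos := tree_degree_pos hT h2
  by_cases hB : ∃ r, 3 ≤ G.degree r
  · obtain ⟨r, hr⟩ := hB
    obtain ⟨par, hpar⟩ := exists_parent hT r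
    let P : Finset V := {a | a ≠ r ∧ ∀ y, G.dist a y < G.dist (par a) y → G.degree y ≤ 2}
    let A : Finset V := {a ∈ P | 3 ≤ G.degree (par a)}
    have hself : ∀ a ∈ P, G.degree a ≤ 2 := by
      intro a ha
      simp only [P, Finset.mem_filter, Finset.mem_univ, true_and] at ha
      apply ha.2
      have := hT.connected.pos_dist_of_ne (hpar a ha.1).1.ne'
      simpa using this
    -- descending one step
    have hstep : ∀ a y, a ≠ r → G.dist a y < G.dist (par a) y → y ≠ a →
        ∃ c, G.Adj a c ∧ c ≠ par a ∧ c ≠ r ∧ par c = a ∧ G.dist c y < G.dist a y := by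
      intro a y ha hy hya
      obtain ⟨c, hc, hcd⟩ := exists_closer hT (v := a) (y := y) (fun e => hya e.symm)
      have hcp : c ≠ par a := by rintro rfl; omega
      have := (hpar a ha).2.2 c hc hcp
      exact ⟨c, hc, hcp, this.1, this.2, by omega⟩
    have hdeg2 : ∀ x u v, G.Adj x u → G.Adj x v → u ≠ v → 2 ≤ G.degree x := by
      intro x u v hu hv huv
      rw [← SimpleGraph.card_neighborFinset_eq_degree, ← Finset.card_pair huv]
      apply Finset.card_le_card
      intro w hw
      simp only [Finset.mem_insert, Finset.mem_singleton] at hw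
      rcases hw with rfl | rfl <;> simpa
    have hdeg3 : ∀ x u v w, G.Adj x u → G.Adj x v → G.Adj x w → u ≠ v → u ≠ w → v ≠ w →
        3 ≤ G.degree x := by
      intro x u v w hu hv hw huv huw hvw
      rw [← SimpleGraph.card_neighborFinset_eq_degree, ← Finset.card_eq_three.2 ⟨u, v, w, huv, huw, hvw, rfl⟩]
      apply Finset.card_le_card
      intro z hz
      simp only [Finset.mem_insert, Finset.mem_singleton] at hz
      rcases hz with rfl | rfl | rfl <;> simpa
    have hparne : ∀ a, a ≠ r → par a ≠ r → a ≠ par (par a) := by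
      intro a ha hpa e
      have h1 := (hpar a ha).2.1
      have h2 := (hpar _ hpa).2.1
      rw [← e] at h2
      omega
    have hleafP : ∀ a, G.degree a = 1 → a ∈ P := by
      intro a ha
      have har : a ≠ r := by rintro rfl; omega
      simp only [P, Finset.mem_filter, Finset.mem_univ, true_and]
      refine ⟨har, fun y hy => ?_⟩
      by_cases hya : y = a
      · rw [hya]; omega
      · obtain ⟨c, hc, hcp, -⟩ := hstep a y har hy hya
        have := hdeg2 a _ _ hc (hpar a har).1 hcp
        omega
    -- parents of pendant vertices
    have hup : ∀ a ∈ P, G.degree (par a) ≤ 2 → par a ∈ P ∧ G.degree (par a) = 2 := by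
      intro a ha hd
      simp only [P, Finset.mem_filter, Finset.mem_univ, true_and] at ha ⊢
      have hpa : par a ≠ r := by rintro e; rw [e] at hd; omega
      have hne := hparne a ha.1 hpa
      have ha1 := (hpar a ha.1).1
      have hpa1 := (hpar _ hpa).1
      refine ⟨⟨hpa, fun y hy => ?_⟩, ?_⟩
      · by_cases hya : y = par a
        · rw [hya]; exact hd
        · obtain ⟨c, hc, hcp, hcr, hcpar, hcd⟩ := hstep _ y hpa hy hya
          by_cases hca : c = a
          · subst hca; exact ha.2 y hcd
          · have := hdeg3 (par a) c a _ hc ha1.symm hpa1 hca hcp hne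
            omega
      · have := hdeg2 (par a) a _ ha1.symm hpa1 hne
        omega
    have hAcard : #{v | G.degree v = 1} ≤ #A := by
      have e1 : #A + #{a ∈ P | ¬ 3 ≤ G.degree (par a)} = #P :=
        Finset.card_filter_add_card_filter_not _
      have e2 : #{a ∈ P | G.degree a = 2} + #{a ∈ P | ¬ G.degree a = 2} = #P :=
        Finset.card_filter_add_card_filter_not _
      have e3 : #{a ∈ P | ¬ 3 ≤ G.degree (par a)} ≤ #{a ∈ P | G.degree a = 2} := by
        apply Finset.card_le_card_of_injOn par
        · intro a ha
          simp only [Finset.coe_filter, Set.mem_ofPred_eq] at ha ⊢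
          exact hup a ha.1 (by omega)
        · intro a ha b hb hab
          simp only [Finset.coe_filter, Set.mem_ofPred_eq] at ha hb
          by_contra hne
          have h3 := (hup a ha.1 (by omega)).1
          have haP := ha.1
          have hbP := hb.1
          simp only [P, Finset.mem_filter, Finset.mem_univ, true_and] at h3 haP hbP
          have h4 := hdeg3 (par a) a b (par (par a)) (hpar a haP.1).1.symm
            (by rw [hab]; exact (hpar b hbP.1).1.symm) (hpar _ h3.1).1 hne
            (hparne a haP.1 h3.1) (by rw [hab] at h3 ⊢; exact hparne b hbP.1 h3.1)
          omega
      have e4 : #{v | G.degree v = 1} ≤ #{a ∈ P | ¬ G.degree a = 2} := by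
        apply Finset.card_le_card
        intro a ha
        simp only [Finset.mem_filter, Finset.mem_univ, true_and] at ha
        simp only [Finset.mem_filter]
        exact ⟨hleafP a ha, by omega⟩
      omega
    have hA := sum_half_le_homNumber G A par (by
      intro a ha b hb hne
      simp only [A, P, Finset.mem_filter, Finset.mem_univ, true_and] at ha hb
      refine dist_add_two hT (hpar a ha.1.1).1 (hpar b hb.1.1).1 hne ?_ ?_
      · intro h3
        have := ha.1.2 _ h3
        omega
      · intro h3
        have := hb.1.2 _ h3
        omega)
    have hfib : #A = ∑ x, #{a ∈ A | par a = x} :=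
      Finset.card_eq_sum_card_fiberwise (fun _ _ => by simp)
    have hloc : ∀ x : V, 3 * #{a ∈ A | par a = x} + 1 + 4 ≤
        6 * (#{a ∈ A | par a = x} / 2) + 2 * G.degree x + 3 * (if G.degree x = 1 then 1 else 0)
          + (if G.degree x = 2 then 1 else 0) + 4 * (if G.degree x = 3 then 1 else 0) := by
      intro x
      have h1 := hpos x
      have h3 : ¬ 3 ≤ G.degree x → #{a ∈ A | par a = x} = 0 := by
        intro h
        rw [Finset.card_eq_zero, Finset.filter_eq_empty_iff]
        rintro a ha rfl
        exact h (Finset.mem_filter.1 ha).2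
      by_cases h4 : 3 ≤ G.degree x
      · split_ifs <;> omega
      · rw [h3 h4]
        split_ifs <;> omega
    have htot := Finset.sum_le_sum (fun x (_ : x ∈ Finset.univ) => hloc x)
    simp only [Finset.sum_add_distrib, ← Finset.mul_sum, ← Finset.card_filter, Finset.sum_const,
      Finset.card_univ, smul_eq_mul] at htot
    rw [← hfib] at htot
    omega
  · push Not at hB
    have h1 : 1 ≤ homNumber G := by
      obtain ⟨u, v, huv⟩ := Fintype.one_lt_card_iff.1 (by omega : 1 < Fintype.card V)
      have := le_homNumber_of_family G (ι := Unit) (fun _ => u) (fun _ => v)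
        (fun _ _ _ => rfl) (fun _ _ _ => rfl) (fun _ _ => huv) (by simp)
      simpa using this
    have hloc : ∀ x : V, 2 ≤ G.degree x + (1 - (if G.degree x = 2 then 1 else 0)) := by
      intro x
      have := hpos x
      have := hB x
      split_ifs <;> omega
    have hloc2 : ∀ x : V, G.degree x = 1 + (if G.degree x = 2 then 1 else 0) := by
      intro x
      have := hpos x
      have := hB x
      split_ifs <;> omega
    have htot : ∑ x, G.degree x = ∑ x : V, (1 + (if G.degree x = 2 then 1 else 0)) :=
      Finset.sum_congr rfl (fun x _ => hloc2 x)
    simp only [Finset.sum_add_distrib, ← Finset.card_filter, Finset.sum_const,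
      Finset.card_univ, smul_eq_mul] at htot
    omega

/-- For every tree `T` on `n ≥ 2` vertices, with `d_i` the number of vertices of
degree `i`: `h(T) ≥ (n − d₂ − 4d₃)/6` and `h(T) ≥ (n − d₁ − d₂)/(2·diam(T))`. -/
theorem stmt19 {V : Type*} [Fintype V] (G : SimpleGraph V) [DecidableRel G.Adj]
    (hT : G.IsTree) (n : ℕ) (hn : Fintype.card V = n) (h2 : 2 ≤ n)
    (d : ℕ → ℕ) (hd : ∀ i, d i = {v : V | G.degree v = i}.ncard) :
    ((n : ℝ) - d 2 - 4 * d 3) / 6 ≤ homNumber G ∧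
      ((n : ℝ) - d 1 - d 2) / (2 * G.diam) ≤ homNumber G := by
  classical
  subst hn
  have hd' : ∀ i, d i = #{v | G.degree v = i} := by
    intro i
    rw [hd, ← Set.ncard_coe_finset]
    simp
  constructor
  · have h := part_one hT h2
    rw [← hd', ← hd'] at h
    have h' : (Fintype.card V : ℝ) ≤ 6 * homNumber G + d 2 + 4 * d 3 := by exact_mod_cast h
    rw [div_le_iff₀ (by norm_num)]
    linarith
  · have h := part_two hT h2
    have hc : Fintype.card V ≤ d 1 + d 2 + #{v | 3 ≤ G.degree v} := by
      rw [hd', hd', Finset.card_filter, Finset.card_filter, Finset.card_filter,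
        ← Finset.sum_add_distrib, ← Finset.sum_add_distrib, ← Finset.card_univ,
        Finset.card_eq_sum_ones]
      apply Finset.sum_le_sum
      intro x _
      have := tree_degree_pos hT h2 x
      split_ifs <;> omega
    have h' : (Fintype.card V : ℝ) ≤ d 1 + d 2 + 2 * G.diam * homNumber G := by
      exact_mod_cast hc.trans (by omega)
    apply div_le_of_le_mul₀ (by positivity) (by positivity)
    linarith
end
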